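/- arXiv:1003.5289 — 2 statements merged into one kernel-verified Lean document; each statement's English description precedes it below -/
import Mathlib

section
/- Let D = π₁⋯πₙ with πₖ ≡ 1 (mod 12) distinct primes of ℤ[τ], let D_T be a subproduct of the πₖ, and let c ∈ O_K be relatively prime to D. Then (D_T/(6c+D))₂ = (2c/D_T)₂, where (·/·)₂ is the quadratic residue symbol in K = ℚ(√−3). -/
noncomputable section

open Complex Real ComplexConjugate

/-- `τ = (−1+√−3)/2`, a primitive cube root of unity. -/
def tau : ℂ := (-1 + Real.sqrt 3 * Complex.I) / 2

/-- `√−3 = 1 + 2τ`, the square root of `−3` with positive imaginary part. -/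
def sqrtm3 : ℂ := Real.sqrt 3 * Complex.I

/-- The ring of integers `O_K = ℤ[τ]` of `K = ℚ(√−3)`, as a subring of `ℂ`. -/
def Eis : Subring ℂ := Subring.closure {tau}

/-- `τ` as an element of `ℤ[τ]`. -/
def tauO : Eis := ⟨tau, Subring.subset_closure rfl⟩

/-- `√−3` as an element of `ℤ[τ]`. -/
def sqrtm3O : Eis := 1 + 2 * tauO

/-- Membership in the lattice `L_ω = ω·ℤ[τ]`. -/
def inLattice (ω : ℝ) (z : ℂ) : Prop := ∃ a : Eis, z = (ω : ℂ) * a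

/-- The Weierstrass `℘`-function of the lattice `L_ω = ω·ℤ[τ]`. -/
def wp (ω : ℝ) (z : ℂ) : ℂ :=
  1 / z ^ 2 + ∑' a : {w : ℂ // inLattice ω w ∧ w ≠ 0},
    (1 / (z - (a : ℂ)) ^ 2 - 1 / (a : ℂ) ^ 2)

/-- The Weierstrass `ζ`-function of the lattice `L_ω = ω·ℤ[τ]`. -/
def wzeta (ω : ℝ) (z : ℂ) : ℂ :=
  1 / z + ∑' a : {w : ℂ // inLattice ω w ∧ w ≠ 0},
    (1 / (z - (a : ℂ)) + 1 / (a : ℂ) + z / (a : ℂ) ^ 2)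

/-- The real cube root of 2, as a complex number. -/
def cbrt2 : ℂ := ((2 : ℝ) ^ ((1 : ℝ) / 3) : ℝ)

/-- The real cube root of 4, as a complex number. -/
def cbrt4 : ℂ := ((4 : ℝ) ^ ((1 : ℝ) / 3) : ℝ)


/-- Characterization of the quadratic residue symbol `(x/d)₂` in `K = ℚ(√−3)`,
taking values in `ℤ[τ]`: it is multiplicative in the denominator, equals `1` on unit
denominators, and on odd prime denominators `p` it is the unique element of `{1, −1}`
congruent to `x^((Np−1)/2)` modulo `p`. -/
def IsQuadSym (q : Eis → Eis → Eis) : Prop :=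
  (∀ x d e, q x (d * e) = q x d * q x e) ∧
  (∀ x u, IsUnit u → q x u = 1) ∧
  (∀ x p, Prime p → IsCoprime p 2 → IsCoprime x p →
    (q x p = 1 ∨ q x p = -1) ∧
    ∀ m : ℕ, Complex.normSq (p : ℂ) = (m : ℝ) → p ∣ (q x p - x ^ ((m - 1) / 2)))

/-- Characterization of the sextic residue symbol `(x/d)₆` in `K = ℚ(√−3)`,
taking values in `ℤ[τ]`: it is multiplicative in the denominator, equals `1` on unit
denominators, and on prime denominators `p` coprime to `6` it is the unique sixth root
of unity congruent to `x^((Np−1)/6)` modulo `p`. -/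
def IsHexSym (h : Eis → Eis → Eis) : Prop :=
  (∀ x d e, h x (d * e) = h x d * h x e) ∧
  (∀ x u, IsUnit u → h x u = 1) ∧
  (∀ x p, Prime p → IsCoprime p 6 → IsCoprime x p →
    (h x p) ^ 6 = 1 ∧
    ∀ m : ℕ, Complex.normSq (p : ℂ) = (m : ℝ) → p ∣ (h x p - x ^ ((m - 1) / 6)))

/-- `ψ` is the Hecke character (Grössencharacter) of `K = ℚ(√−3)` attached to the
elliptic curve `y² = x³ + DT³`, viewed on elements of `O_K = ℤ[τ]` (extended by `0`
off ideals coprime to the conductor `(2√−3·DT)`): it is multiplicative, depends only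
on the ideal generated by its argument, its value divided by its argument depends only
on the argument modulo `2√−3·DT`, and for `α ≡ 1 (mod 6)` coprime to `6·DT` it is given
by `ψ(α) = conj((4DT³/α)₆)·α` (`hex` being the sextic residue symbol). -/
def IsAttachedHecke (DT : Eis) (hex : Eis → Eis → Eis) (ψ : Eis → ℂ) : Prop :=
  (∀ α β, ψ (α * β) = ψ α * ψ β) ∧
  (∀ α, ψ α = 0 ↔ ¬ IsCoprime α (2 * sqrtm3O * DT)) ∧
  (∀ u α, IsUnit u → ψ (u * α) = ψ α) ∧
  (∀ α β, IsCoprime α (2 * sqrtm3O * DT) → IsCoprime β (2 * sqrtm3O * DT) →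
    2 * sqrtm3O * DT ∣ (α - β) → ψ α * (β : ℂ) = ψ β * (α : ℂ)) ∧
  (∀ α, IsCoprime α (6 * DT) → (6 : Eis) ∣ (α - 1) →
    ψ α = conj ((hex (4 * DT ^ 3) α : Eis) : ℂ) * (α : ℂ))

/-- `C` is a complete set of representatives of the residue classes of `ℤ[τ]` modulo `D`
that are relatively prime to `D`. -/
def IsRepSet (D : Eis) (C : Finset Eis) : Prop :=
  (∀ c ∈ C, IsCoprime c D) ∧
  ∀ x : Eis, IsCoprime x D → ∃! c, c ∈ C ∧ D ∣ (x - c)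

/-! ### Coordinates and the norm -/

def emk (a b : ℤ) : Eis := (a : Eis) + (b : Eis) * tauO

lemma tau_sq : tau ^ 2 = -1 - tau := by
  have h : ((Real.sqrt 3 : ℝ) : ℂ) ^ 2 = 3 := by
    rw [← Complex.ofReal_pow, Real.sq_sqrt (by norm_num)]; norm_num
  have hI := Complex.I_sq
  unfold tau
  linear_combination (1/4 : ℂ) * Complex.I ^ 2 * h + (3/4 : ℂ) * hI

lemma tauO_sq : tauO ^ 2 = -1 - tauO := by
  apply Subtype.ext
  simpa [tauO] using tau_sq

lemma tauO_mul : tauO * tauO = -1 - tauO := by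
  rw [← sq, tauO_sq]

lemma emk_mul (a b c d : ℤ) : emk a b * emk c d = emk (a*c - b*d) (a*d + b*c - b*d) := by
  unfold emk; push_cast
  linear_combination (b * d : Eis) * tauO_sq

lemma emk_add (a b c d : ℤ) : emk a b + emk c d = emk (a+c) (b+d) := by
  unfold emk; push_cast; ring

lemma emk_sub (a b c d : ℤ) : emk a b - emk c d = emk (a-c) (b-d) := by
  unfold emk; push_cast; ring

lemma emk_int (a : ℤ) : emk a 0 = (a : Eis) := by simp [emk]

lemma exists_emk (x : Eis) : ∃ a b : ℤ, x = emk a b := by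
  obtain ⟨x, hx⟩ := x
  have : ∃ a b : ℤ, x = ((emk a b : Eis) : ℂ) := by
    unfold Eis at hx
    induction hx using Subring.closure_induction with
    | mem x hx => exact ⟨0, 1, by simp at hx; simp [emk, tauO, hx]⟩
    | zero => exact ⟨0, 0, by simp [emk]⟩
    | one => exact ⟨1, 0, by simp [emk]⟩
    | add x y _ _ h1 h2 =>
      obtain ⟨a, b, rfl⟩ := h1
      obtain ⟨c, d, rfl⟩ := h2
      exact ⟨a+c, b+d, by rw [← emk_add]; rfl⟩
    | neg x _ h1 =>
      obtain ⟨a, b, rfl⟩ := h1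
      exact ⟨-a, -b, by simp [emk]; ring⟩
    | mul x y _ _ h1 h2 =>
      obtain ⟨a, b, rfl⟩ := h1
      obtain ⟨c, d, rfl⟩ := h2
      exact ⟨_, _, by rw [← Subring.coe_mul, emk_mul]⟩
  obtain ⟨a, b, h⟩ := this
  exact ⟨a, b, Subtype.ext h⟩

lemma emk_re (a b : ℤ) : ((emk a b : Eis) : ℂ).re = a - b / 2 := by
  simp [emk, tauO, tau]; ring

lemma emk_im (a b : ℤ) : ((emk a b : Eis) : ℂ).im = b * Real.sqrt 3 / 2 := by
  simp [emk, tauO, tau]; ring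

lemma normSq_emk (a b : ℤ) : Complex.normSq ((emk a b : Eis) : ℂ) = ((a^2 - a*b + b^2 : ℤ) : ℝ) := by
  have h : (Real.sqrt 3) ^ 2 = 3 := Real.sq_sqrt (by norm_num)
  rw [Complex.normSq_apply, emk_re, emk_im]
  push_cast
  linear_combination (b^2/4 : ℝ) * h

lemma emk_inj {a b c d : ℤ} (h : emk a b = emk c d) : a = c ∧ b = d := by
  have h1 : emk (a - c) (b - d) = 0 := by rw [← emk_sub, h, sub_self]
  have h2 := normSq_emk (a - c) (b - d)
  rw [h1] at h2
  have h3 : (a-c)^2 - (a-c)*(b-d) + (b-d)^2 = 0 := by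
    have : ((0:ℤ):ℝ) = (((a-c)^2 - (a-c)*(b-d) + (b-d)^2 : ℤ) : ℝ) := by
      rw [← h2]; simp
    exact_mod_cast this.symm
  have hb : b - d = 0 := by nlinarith [sq_nonneg (2*(a-c) - (b-d))]
  rw [hb] at h3
  have ha : a - c = 0 := by nlinarith
  omega

/-- The norm. -/
def Nm (x : Eis) : ℕ := ⌊Complex.normSq (x : ℂ)⌋₊

lemma Nm_emk (a b : ℤ) : ((Nm (emk a b) : ℕ) : ℤ) = a^2 - a*b + b^2 := by
  have h0 : 0 ≤ a^2 - a*b + b^2 := by nlinarith [sq_nonneg (2*a - b), sq_nonneg b]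
  unfold Nm
  obtain ⟨n, hn⟩ := Int.eq_ofNat_of_zero_le h0
  rw [normSq_emk, hn]
  simp

lemma Nm_eq (x : Eis) : Complex.normSq (x : ℂ) = (Nm x : ℝ) := by
  obtain ⟨a, b, rfl⟩ := exists_emk x
  rw [normSq_emk, ← Nm_emk]; simp

lemma Nm_mul (x y : Eis) : Nm (x * y) = Nm x * Nm y := by
  have : ((Nm (x * y) : ℕ) : ℝ) = ((Nm x * Nm y : ℕ) : ℝ) := by
    push_cast
    rw [← Nm_eq, ← Nm_eq, ← Nm_eq]; simp
  exact_mod_cast this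

lemma Nm_eq_zero {x : Eis} (h : Nm x = 0) : x = 0 := by
  have := Nm_eq x
  rw [h] at this
  simpa using this

lemma emk_conj (a b : ℤ) : emk a b * emk (a - b) (-b) = ((a^2 - a*b + b^2 : ℤ) : Eis) := by
  rw [emk_mul, ← emk_int]; congr 1 <;> ring

lemma exists_conj (x : Eis) : ∃ y, x * y = (Nm x : Eis) := by
  obtain ⟨a, b, rfl⟩ := exists_emk x
  refine ⟨_, (emk_conj a b).trans ?_⟩
  rw [← Nm_emk]; simp

lemma isUnit_of_Nm {x : Eis} (h : Nm x = 1) : IsUnit x := by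
  obtain ⟨y, hy⟩ := exists_conj x
  rw [h, Nat.cast_one] at hy
  exact IsUnit.of_mul_eq_one y hy

lemma Nm_one : Nm 1 = 1 := by simp [Nm]

lemma Nm_unit {x : Eis} (h : IsUnit x) : Nm x = 1 := by
  obtain ⟨y, hy⟩ := h.exists_right_inv
  have := Nm_mul x y
  rw [hy, Nm_one] at this
  exact Nat.eq_one_of_mul_eq_one_right this.symm

lemma Nm_int (k : ℤ) : ((Nm (k : Eis) : ℕ) : ℤ) = k ^ 2 := by
  rw [← emk_int, Nm_emk]; ring

lemma Nm_nat (k : ℕ) : Nm (k : Eis) = k ^ 2 := by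
  have := Nm_int k
  simp only [Int.cast_natCast] at this
  exact_mod_cast this

lemma int_dvd_emk {k a b : ℤ} (h : (k : Eis) ∣ emk a b) : k ∣ a ∧ k ∣ b := by
  obtain ⟨y, hy⟩ := h
  obtain ⟨c, d, rfl⟩ := exists_emk y
  rw [← emk_int, emk_mul] at hy
  obtain ⟨h1, h2⟩ := emk_inj hy
  exact ⟨⟨c, by linarith⟩, ⟨d, by linarith⟩⟩

lemma eis_div (x y : Eis) (hy : y ≠ 0) : ∃ q : Eis, Nm (x - y * q) < Nm y := by
  set z : ℂ := (x : ℂ) / (y : ℂ) with hz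
  have hy' : (y : ℂ) ≠ 0 := by simpa using hy
  set b : ℤ := round (z.im * 2 / Real.sqrt 3)
  set a : ℤ := round (z.re + b / 2)
  refine ⟨emk a b, ?_⟩
  have e : ((x - y * emk a b : Eis) : ℂ) = y * (z - (emk a b : Eis)) := by
    push_cast
    rw [hz]; field_simp
  have h3 : (Real.sqrt 3) ^ 2 = 3 := Real.sq_sqrt (by norm_num)
  have h30 : Real.sqrt 3 ≠ 0 := by positivity
  have hb := abs_sub_round (z.im * 2 / Real.sqrt 3)
  have ha := abs_sub_round (z.re + b / 2)
  have hb2 : (z.im * 2 / Real.sqrt 3 - b)^2 ≤ 1/4 := by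
    rw [← sq_abs]; nlinarith [abs_nonneg (z.im * 2 / Real.sqrt 3 - b)]
  have ha2 : (z.re + b/2 - a)^2 ≤ 1/4 := by
    rw [← sq_abs]; nlinarith [abs_nonneg (z.re + b/2 - a)]
  have key : Complex.normSq (z - (emk a b : Eis)) < 1 := by
    rw [Complex.normSq_apply, Complex.sub_re, Complex.sub_im, emk_re, emk_im]
    have e2 : z.im - b * Real.sqrt 3 / 2 = (z.im * 2 / Real.sqrt 3 - b) * (Real.sqrt 3 / 2) := by
      field_simp
    rw [e2]
    have e3 : (z.im * 2 / Real.sqrt 3 - b) * (Real.sqrt 3 / 2) * ((z.im * 2 / Real.sqrt 3 - b) * (Real.sqrt 3 / 2)) = (z.im * 2 / Real.sqrt 3 - b)^2 * (3/4) := by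
      linear_combination (z.im * 2 / Real.sqrt 3 - b)^2 / 4 * h3
    rw [e3]
    nlinarith
  have : ((Nm (x - y * emk a b) : ℕ) : ℝ) < ((Nm y : ℕ) : ℝ) := by
    rw [← Nm_eq, ← Nm_eq, e, Complex.normSq_mul]
    have : 0 < Complex.normSq (y : ℂ) := Complex.normSq_pos.mpr hy'
    nlinarith
  exact_mod_cast this

instance eisPID : IsPrincipalIdealRing Eis := by
  refine ⟨fun I => ?_⟩
  by_cases hI : I = ⊥
  · exact ⟨⟨0, by simp [hI]⟩⟩
  · obtain ⟨x0, hx0, hx0n⟩ := Submodule.exists_mem_ne_zero_of_ne_bot hI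
    have hex : ∃ n, ∃ x ∈ I, x ≠ 0 ∧ Nm x = n := ⟨_, x0, hx0, hx0n, rfl⟩
    classical
    obtain ⟨g, hg, hg0, hgn⟩ := Nat.find_spec hex
    refine ⟨⟨g, le_antisymm ?_ ?_⟩⟩
    · intro x hx
      obtain ⟨q, hq⟩ := eis_div x g hg0
      have hmem : x - g * q ∈ I := I.sub_mem hx (I.mul_mem_right _ hg)
      have : x - g * q = 0 := by
        by_contra hne
        have := Nat.find_min' hex ⟨_, hmem, hne, rfl⟩
        omega
      exact Ideal.mem_span_singleton'.mpr ⟨q, by rw [sub_eq_zero] at this; rw [this, mul_comm]⟩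
    · exact (Ideal.span_singleton_le_iff_mem I).mpr hg

/-! ### Jacobi symbol lemmas -/

lemma jac_recip_one (e : ℤ) (r : ℕ) (he : e % 4 = 1) (hr : Odd r) :
    jacobiSym e r = jacobiSym r e.natAbs := by
  rcases Int.natAbs_eq e with h | h
  · have h1 : e.natAbs % 4 = 1 := by omega
    conv_lhs => rw [h]
    exact jacobiSym.quadratic_reciprocity_one_mod_four h1 hr
  · have h1 : e.natAbs % 4 = 3 := by omega
    conv_lhs => rw [h]
    rw [jacobiSym.neg _ hr]
    have hr2 : r % 4 = 1 ∨ r % 4 = 3 := by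
      obtain ⟨k, hk⟩ := hr; omega
    rcases hr2 with h2 | h2
    · rw [ZMod.χ₄_nat_one_mod_four h2, one_mul]
      exact (jacobiSym.quadratic_reciprocity_one_mod_four h2 (Nat.odd_iff.mpr (by omega))).symm
    · rw [ZMod.χ₄_nat_three_mod_four h2, jacobiSym.quadratic_reciprocity_three_mod_four h1 h2]
      ring

lemma jac_recip_odd (e : ℤ) (p : ℕ) (he : e % 2 = 1) (hp : p % 4 = 1) :
    jacobiSym e p = jacobiSym p e.natAbs := by
  have hpo : Odd p := Nat.odd_iff.mpr (by omega)
  have hodd : Odd e.natAbs := Nat.odd_iff.mpr (by omega)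
  rw [jacobiSym.quadratic_reciprocity_one_mod_four hp hodd]
  rcases Int.natAbs_eq e with h | h
  · conv_lhs => rw [h]
  · conv_lhs => rw [h]
    rw [jacobiSym.neg _ hpo, ZMod.χ₄_nat_one_mod_four hp, one_mul]

lemma jac_sq_eq_one {m : ℤ} {n : ℕ} (h : jacobiSym m n ≠ 0) : jacobiSym m n * jacobiSym m n = 1 := by
  rcases jacobiSym.trichotomy m n with h1 | h1 | h1
  · exact absurd h1 h
  · simp [h1]
  · simp [h1]

lemma jac_congr {x y : ℤ} {n : ℕ} (h : (n : ℤ) ∣ x - y) : jacobiSym x n = jacobiSym y n :=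
  jacobiSym.mod_left' (Int.emod_eq_emod_iff_emod_sub_eq_zero.mpr (Int.emod_eq_zero_of_dvd h))

lemma jac_b (a b : ℤ) (p : ℕ) (hp : (p : ℤ) = a^2 - a*b + b^2) (hb : 4 ∣ b) (hb0 : b ≠ 0)
    (ha : a % 2 = 1) (h0 : jacobiSym b p ≠ 0) : jacobiSym b p = 1 := by
  have hsq : a ^ 2 % 8 = 1 := by
    have : a % 8 = 1 ∨ a % 8 = 3 ∨ a % 8 = 5 ∨ a % 8 = 7 := by omega
    rcases this with h | h | h | h <;> rw [pow_two, Int.mul_emod, h] <;> norm_num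
  have hp4 : p % 4 = 1 := by
    obtain ⟨b1, rfl⟩ := hb
    have : (p : ℤ) = a^2 + 4 * (-a*b1 + 4 * b1^2) := by rw [hp]; ring
    omega
  have hpo : Odd p := Nat.odd_iff.mpr (by omega)
  -- odd divisors `e` of `b`
  have hodd : ∀ e : ℤ, e % 2 = 1 → e ∣ b → jacobiSym e p ≠ 0 → jacobiSym e p = 1 := by
    intro e he hd hne
    rw [jac_recip_odd e p he hp4] at hne ⊢
    have : jacobiSym (p : ℤ) e.natAbs = jacobiSym a e.natAbs * jacobiSym a e.natAbs := by
      rw [← jacobiSym.mul_left, ← pow_two]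
      apply jac_congr
      rw [Int.natAbs_dvd, hp]
      obtain ⟨k, rfl⟩ := hd
      exact ⟨k * (e * k - a), by ring⟩
    rw [this] at hne ⊢
    exact jac_sq_eq_one (left_ne_zero_of_mul hne)
  obtain ⟨k, b', hbe, hb'⟩ : ∃ (k : ℕ) (b' : ℤ), b = 2 ^ k * b' ∧ ¬ (2 : ℤ) ∣ b' := by
    have hfin : FiniteMultiplicity (2 : ℤ) b := Int.finiteMultiplicity_iff.mpr ⟨by norm_num, hb0⟩
    obtain ⟨c, h1, h2⟩ := hfin.exists_eq_pow_mul_and_not_dvd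
    exact ⟨_, c, h1, h2⟩
  have h2 : jacobiSym 2 p ^ k = 1 := by
    have h20 : jacobiSym 2 p ≠ 0 := by
      apply jacobiSym.ne_zero
      rw [Int.gcd_comm]
      have : Nat.Coprime p 2 := (Nat.coprime_two_right).mpr hpo
      simpa [Int.gcd] using this
    have hs : jacobiSym 2 p ^ 2 = 1 := by rw [pow_two]; exact jac_sq_eq_one h20
    by_cases hk : 3 ≤ k
    · have h8 : (8 : ℤ) ∣ b := by
        rw [hbe]; exact Dvd.dvd.mul_right (by obtain ⟨j, rfl⟩ := Nat.exists_eq_add_of_le hk; exact ⟨2^j, by rw [pow_add]; norm_num⟩) _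
      have hp8 : p % 8 = 1 := by
        obtain ⟨b1, rfl⟩ := h8
        have : (p : ℤ) = a^2 + 8 * (-a*b1 + 8 * b1^2) := by rw [hp]; ring
        omega
      rw [jacobiSym.at_two hpo, ZMod.χ₈_nat_eq_if_mod_eight]
      simp [hp8, show p % 2 = 1 by omega]
    · have hk2 : k = 2 := by
        have : ¬ (k = 0 ∨ k = 1) := by
          rintro (rfl | rfl)
          · omega
          · omega
        omega
      rw [hk2, hs]
  rw [hbe, jacobiSym.mul_left, jacobiSym.pow_left, h2, one_mul] at h0 ⊢
  exact hodd b' (by omega) ⟨2^k, by rw [hbe]; ring⟩ h0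

/-! ### Basic properties of the symbol -/

lemma not_dvd_two {p : Eis} (hp : Prime p) (h2 : IsCoprime p 2) : ¬ p ∣ 2 := fun h =>
  hp.not_isUnit (h2.isUnit_of_dvd' dvd_rfl h)

lemma pm_eq {p s t : Eis} (hp : Prime p) (h2 : IsCoprime p 2) (hs : s = 1 ∨ s = -1)
    (ht : t = 1 ∨ t = -1) (h : p ∣ s - t) : s = t := by
  have h2' := not_dvd_two hp h2
  rcases hs with rfl | rfl <;> rcases ht with rfl | rfl
  · rfl
  · exact absurd (by simpa [one_add_one_eq_two] using h) h2'
  · exact absurd (by rw [← dvd_neg]; convert h using 1; ring) h2'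
  · rfl

section
variable {q : Eis → Eis → Eis}

lemma q_pm (hq : IsQuadSym q) {x p : Eis} (hp : Prime p) (h2 : IsCoprime p 2)
    (hx : IsCoprime x p) : q x p = 1 ∨ q x p = -1 := (hq.2.2 x p hp h2 hx).1

lemma q_dvd (hq : IsQuadSym q) {x p : Eis} (hp : Prime p) (h2 : IsCoprime p 2)
    (hx : IsCoprime x p) : p ∣ q x p - x ^ ((Nm p - 1) / 2) :=
  (hq.2.2 x p hp h2 hx).2 _ (Nm_eq p)

lemma q_unique (hq : IsQuadSym q) {x p s : Eis} (hp : Prime p) (h2 : IsCoprime p 2)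
    (hx : IsCoprime x p) (hs : s = 1 ∨ s = -1) (h : p ∣ s - x ^ ((Nm p - 1) / 2)) : q x p = s := by
  refine pm_eq hp h2 (q_pm hq hp h2 hx) hs ?_
  have := dvd_sub (q_dvd hq hp h2 hx) h
  convert this using 1; ring

lemma pm_mul {s t : Eis} (hs : s = 1 ∨ s = -1) (ht : t = 1 ∨ t = -1) :
    s * t = 1 ∨ s * t = -1 := by
  rcases hs with rfl | rfl <;> rcases ht with rfl | rfl <;> simp

lemma q_mul (hq : IsQuadSym q) {x y p : Eis} (hp : Prime p) (h2 : IsCoprime p 2)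
    (hx : IsCoprime x p) (hy : IsCoprime y p) : q (x * y) p = q x p * q y p := by
  refine q_unique hq hp h2 (hx.mul_left hy) (pm_mul (q_pm hq hp h2 hx) (q_pm hq hp h2 hy)) ?_
  obtain ⟨a, ha⟩ := q_dvd hq hp h2 hx
  obtain ⟨b, hb⟩ := q_dvd hq hp h2 hy
  refine ⟨a * q y p + x ^ ((Nm p - 1) / 2) * b, ?_⟩
  rw [mul_pow]
  linear_combination (q y p) * ha + x ^ ((Nm p - 1) / 2) * hb

lemma q_congr (hq : IsQuadSym q) {x y p : Eis} (hp : Prime p) (h2 : IsCoprime p 2)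
    (hx : IsCoprime x p) (hy : IsCoprime y p) (h : p ∣ x - y) : q x p = q y p := by
  refine q_unique hq hp h2 hx (q_pm hq hp h2 hy) ?_
  have h1 := q_dvd hq hp h2 hy
  have h3 : p ∣ x ^ ((Nm p - 1) / 2) - y ^ ((Nm p - 1) / 2) := h.trans (sub_dvd_pow_sub_pow _ _ _)
  convert dvd_sub h1 h3 using 1; ring

lemma cop_of_not_dvd {x p : Eis} (hp : Prime p) (h : ¬ p ∣ x) : IsCoprime x p :=
  ((Irreducible.coprime_iff_not_dvd hp.irreducible).mpr h).symm

lemma not_dvd_of_cop {x p : Eis} (hp : Prime p) (h : IsCoprime x p) : ¬ p ∣ x := fun h1 =>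
  hp.not_isUnit (h.isUnit_of_dvd' h1 dvd_rfl)

/-- a unit to the sixth power -/
lemma tauO_cube : tauO ^ 3 = 1 := by
  linear_combination (tauO - 1) * tauO_sq

lemma unit_pow_six {u : Eis} (hu : IsUnit u) : u ^ 6 = 1 := by
  have h := Nm_unit hu
  obtain ⟨a, b, rfl⟩ := exists_emk u
  have h1 := Nm_emk a b
  rw [h] at h1
  push_cast at h1
  have hb1 : b ≤ 1 := by nlinarith [sq_nonneg (2*a - b)]
  have hb2 : -1 ≤ b := by nlinarith [sq_nonneg (2*a - b)]
  have ha1 : a ≤ 1 := by nlinarith [sq_nonneg (2*b - a)]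
  have ha2 : -1 ≤ a := by nlinarith [sq_nonneg (2*b - a)]
  have hsq := tauO_sq
  have h3 : (1 + tauO) ^ 2 = tauO := by linear_combination tauO_sq
  interval_cases a <;> interval_cases b <;> simp at h1 <;> simp [emk]
  · rw [show (-1 + -tauO) ^ 6 = ((1 + tauO) ^ 2) ^ 3 by ring, h3, tauO_cube]
  · ring
  · rw [show (-tauO) ^ 6 = (tauO ^ 3) ^ 2 by ring, tauO_cube, one_pow]
  · rw [show (tauO) ^ 6 = (tauO ^ 3) ^ 2 by ring, tauO_cube, one_pow]
  · rw [show (1 + tauO) ^ 6 = ((1 + tauO) ^ 2) ^ 3 by ring, h3, tauO_cube]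

lemma coords_of_cong {w : Eis} (h : (12 : Eis) ∣ w - 1) :
    ∃ a b : ℤ, w = emk a b ∧ a % 12 = 1 ∧ 12 ∣ b := by
  obtain ⟨a, b, rfl⟩ := exists_emk w
  refine ⟨a, b, rfl, ?_⟩
  have h1 : ((12 : ℤ) : Eis) ∣ emk (a - 1) b := by
    have : emk (a - 1) b = emk a b - 1 := by unfold emk; push_cast; ring
    rw [this]; exact_mod_cast h
  obtain ⟨h2, h3⟩ := int_dvd_emk h1
  exact ⟨by omega, h3⟩

lemma Nm_cong {w : Eis} (h : (12 : Eis) ∣ w - 1) : Nm w % 12 = 1 := by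
  obtain ⟨a, b, rfl, ha, ⟨k, rfl⟩⟩ := coords_of_cong h
  have h1 := Nm_emk a (12 * k)
  obtain ⟨j, rfl⟩ : ∃ j, a = 1 + 12 * j := ⟨a / 12, by omega⟩
  have : ((Nm (emk (1 + 12 * j) (12 * k)) : ℕ) : ℤ) =
      1 + 12 * (2 * j + 12 * j ^2 - (1 + 12 * j) * k + 12 * k^2) := by rw [h1]; ring
  omega

lemma cop_of_cong {w : Eis} (h : (12 : Eis) ∣ w - 1) : IsCoprime w 6 := by
  obtain ⟨k, hk⟩ := h
  exact ⟨1, -2 * k, by linear_combination hk⟩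

lemma cop_two {x : Eis} (h : IsCoprime x 6) : IsCoprime x 2 :=
  IsCoprime.of_isCoprime_of_dvd_right h ⟨3, by norm_num⟩

lemma cop_three {x : Eis} (h : IsCoprime x 6) : IsCoprime x 3 :=
  IsCoprime.of_isCoprime_of_dvd_right h ⟨2, by norm_num⟩

lemma q_unit_num (hq : IsQuadSym q) {u w : Eis} (hp : Prime w) (h : (12 : Eis) ∣ w - 1)
    (hu : IsUnit u) : q u w = 1 := by
  refine q_unique hq hp (cop_two (cop_of_cong h)) ((isCoprime_one_left).of_isCoprime_of_dvd_left hu.dvd) (Or.inl rfl) ?_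
  have h1 := Nm_cong h
  obtain ⟨k, hk⟩ : ∃ k, (Nm w - 1) / 2 = 6 * k := ⟨(Nm w - 1) / 12, by omega⟩
  rw [hk, pow_mul, unit_pow_six hu, one_pow, sub_self]
  exact dvd_zero _

lemma q_three (hq : IsQuadSym q) {w : Eis} (hp : Prime w) (h : (12 : Eis) ∣ w - 1) :
    q 3 w = 1 := by
  have h6 := cop_of_cong h
  have h2 := cop_two h6
  have h3 := cop_three h6
  have e : (3 : Eis) = (-1) * ((1 + 2 * tauO) * (1 + 2 * tauO)) := by
    linear_combination 4 * tauO_sq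
  have hs : IsCoprime (1 + 2 * tauO) w :=
    IsCoprime.of_isCoprime_of_dvd_left h3.symm ⟨(-1) * (1 + 2 * tauO), by rw [e]; ring⟩
  have hu : IsUnit (-1 : Eis) := isUnit_one.neg
  rw [e, q_mul hq hp h2 ((isCoprime_one_left).of_isCoprime_of_dvd_left hu.dvd) (hs.mul_left hs),
    q_mul hq hp h2 hs hs, q_unit_num hq hp h hu]
  rcases q_pm hq hp h2 hs with h | h <;> simp [h]

/-! ### classification of primes -/

lemma prime_class {p : Eis} (hp : Prime p) : ∃ l : ℕ, l.Prime ∧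
    (Nm p = l ∨ (Nm p = l ^ 2 ∧ ∃ u, IsUnit u ∧ p * u = (l : Eis))) := by
  have h1 : Nm p ≠ 1 := fun h => hp.not_isUnit (isUnit_of_Nm h)
  have h0 : Nm p ≠ 0 := fun h => hp.ne_zero (Nm_eq_zero h)
  obtain ⟨y, hy⟩ := exists_conj p
  have key : ∀ n : ℕ, n ≠ 0 → p ∣ (n : Eis) → ∃ l : ℕ, l.Prime ∧ p ∣ (l : Eis) := by
    intro n
    induction n using Nat.recOnMul with
    | zero => intro h; exact absurd rfl h
    | one => intro _ h; exact absurd (isUnit_of_dvd_one (by simpa using h)) hp.not_isUnit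
    | prime l hl => intro _ h; exact ⟨l, hl, h⟩
    | mul a b iha ihb =>
      intro hn h
      push_cast at h
      rcases hp.dvd_or_dvd h with h | h
      · exact iha (left_ne_zero_of_mul hn) h
      · exact ihb (right_ne_zero_of_mul hn) h
  obtain ⟨l, hl, u, hu⟩ := key _ h0 ⟨y, hy.symm⟩
  refine ⟨l, hl, ?_⟩
  have h3 : l ^ 2 = Nm p * Nm u := by rw [← Nm_mul, ← hu, Nm_nat]
  have h4 : Nm p ∣ l ^ 2 := ⟨_, h3⟩
  obtain ⟨k, hk, hk2⟩ := (Nat.dvd_prime_pow hl).mp h4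
  interval_cases k
  · simp at hk2; exact absurd hk2 h1
  · left; simpa using hk2
  · right
    refine ⟨hk2, u, isUnit_of_Nm ?_, hu.symm⟩
    rw [hk2] at h3
    have : 0 < l ^ 2 := pow_pos hl.pos 2
    exact Nat.eq_of_mul_eq_mul_left this (by linarith)

end

/-! ### explicit evaluation of the symbol -/

section
variable {q : Eis → Eis → Eis}

lemma int_dvd_cast {l : ℕ} {k : ℤ} (h : (l : ℤ) ∣ k) : (l : Eis) ∣ (k : Eis) := by
  obtain ⟨j, rfl⟩ := h
  exact ⟨(j : Eis), by push_cast; ring⟩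

lemma jac_pow {l : ℕ} (hl : l.Prime) (hodd : l % 2 = 1) (e : ℤ) :
    (l : Eis) ∣ ((jacobiSym e l : ℤ) : Eis) - (e : Eis) ^ ((l - 1) / 2) := by
  have : Fact l.Prime := ⟨hl⟩
  have h := legendreSym.eq_pow l e
  rw [jacobiSym.legendreSym.to_jacobiSym, show l / 2 = (l - 1) / 2 by omega] at h
  have h2 : (l : ℤ) ∣ jacobiSym e l - e ^ ((l - 1) / 2) := by
    rw [← ZMod.intCast_zmod_eq_zero_iff_dvd]
    push_cast
    rw [h, sub_self]
  have := int_dvd_cast h2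
  push_cast at this
  exact this

lemma jac_pm {e : ℤ} {l : ℕ} (h : jacobiSym e l ≠ 0) :
    ((jacobiSym e l : ℤ) : Eis) = 1 ∨ ((jacobiSym e l : ℤ) : Eis) = -1 := by
  rcases jacobiSym.trichotomy e l with h1 | h1 | h1
  · exact absurd h1 h
  · left; simp [h1]
  · right; simp [h1]

lemma jac_ne_zero_of_not_dvd {l : ℕ} (hl : l.Prime) {e : ℤ} (h : ¬ (l : ℤ) ∣ e) :
    jacobiSym e l ≠ 0 := by
  apply jacobiSym.ne_zero
  rw [← Int.isCoprime_iff_gcd_eq_one]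
  exact ((Irreducible.coprime_iff_not_dvd (Nat.prime_iff_prime_int.mp hl).irreducible).mpr h).symm

lemma odd_of_cop {p : Eis} {l : ℕ} (hl : l.Prime) (hp : Prime p) (h2 : IsCoprime p 2)
    (h : p ∣ (l : Eis)) : l % 2 = 1 := by
  rcases hl.eq_two_or_odd with rfl | h'
  · exact absurd (by exact_mod_cast h) (not_dvd_two hp h2)
  · exact h'

lemma dvd_Nm (p : Eis) : p ∣ (Nm p : Eis) := by
  obtain ⟨y, hy⟩ := exists_conj p
  exact ⟨y, hy.symm⟩

lemma q_split (hq : IsQuadSym q) {l : ℕ} (hl : l.Prime) (a b c d : ℤ)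
    (hp : Prime (emk a b)) (h2 : IsCoprime (emk a b) 2) (hN : Nm (emk a b) = l)
    (hx : IsCoprime (emk c d) (emk a b)) :
    q (emk c d) (emk a b) = ((jacobiSym (b * (b * c - a * d)) l : ℤ) : Eis) := by
  have hpl : emk a b ∣ (l : Eis) := by rw [← hN]; exact dvd_Nm _
  have hodd := odd_of_cop hl hp h2 hpl
  have hNZ := Nm_emk a b
  rw [hN] at hNZ
  have hlZ : Prime (l : ℤ) := Nat.prime_iff_prime_int.mp hl
  have hb : ¬ (l : ℤ) ∣ b := by
    intro h
    have ha : (l : ℤ) ∣ a := by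
      apply hlZ.dvd_of_dvd_pow (n := 2)
      obtain ⟨k, hk⟩ := h
      refine ⟨1 + a * k - b * k, ?_⟩
      have : a ^ 2 = l + a * b - b * b := by rw [hNZ]; ring
      rw [this]; nth_rewrite 1 [hk]; nth_rewrite 2 [hk]; ring
    have : (l : ℤ) * l ∣ l := by
      obtain ⟨k, rfl⟩ := h
      obtain ⟨j, rfl⟩ := ha
      exact ⟨j^2 - j*k + k^2, hNZ.trans (by ring)⟩
    have h3 := Int.le_of_dvd (by exact_mod_cast hl.pos) this
    have h4 : (2 : ℤ) ≤ l := by exact_mod_cast hl.two_le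
    nlinarith
  -- `p ∣ k → l ∣ k`
  have hint : ∀ k : ℤ, emk a b ∣ (k : Eis) → (l : ℤ) ∣ k := by
    rintro k ⟨y, hy⟩
    have := congrArg Nm hy
    rw [Nm_mul, hN] at this
    have h3 := Nm_int k
    rw [this] at h3
    apply hlZ.dvd_of_dvd_pow (n := 2)
    exact ⟨Nm y, by rw [← h3]; push_cast; ring⟩
  set e := b * (b * c - a * d) with he
  have hcong : emk a b ∣ (b : Eis) ^ 2 * emk c d - (e : Eis) := by
    refine ⟨b * d, ?_⟩
    rw [he]; unfold emk; push_cast; ring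
  have hbE : ¬ emk a b ∣ (b : Eis) := fun h => hb (hint b h)
  have he0 : ¬ (l : ℤ) ∣ e := by
    intro h
    have h3 : emk a b ∣ (e : Eis) := hpl.trans (int_dvd_cast h)
    have h4 : emk a b ∣ (b : Eis) ^ 2 * emk c d := (dvd_sub_left h3).mp hcong
    rcases hp.dvd_or_dvd h4 with h5 | h5
    · exact hbE (hp.dvd_of_dvd_pow h5)
    · exact not_dvd_of_cop hp hx h5
  refine q_unique hq hp h2 hx (jac_pm (jac_ne_zero_of_not_dvd hl he0)) ?_
  rw [hN]
  have h3 := hpl.trans (jac_pow hl hodd e)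
  have h4 : emk a b ∣ ((b : Eis) ^ 2 * emk c d) ^ ((l - 1) / 2) - (e : Eis) ^ ((l - 1) / 2) :=
    hcong.trans (sub_dvd_pow_sub_pow _ _ _)
  have h5 : emk a b ∣ (b : Eis) ^ (l - 1) - 1 := by
    have : (l : ℤ) ∣ b ^ (l - 1) - 1 := by
      have hc : IsCoprime b l := ((Irreducible.coprime_iff_not_dvd hlZ.irreducible).mpr hb).symm
      exact (Int.ModEq.pow_card_sub_one_eq_one hl hc).symm.dvd
    have := hpl.trans (int_dvd_cast this)
    push_cast at this
    exact this
  rw [mul_pow, ← pow_mul, show 2 * ((l - 1) / 2) = l - 1 by omega] at h4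
  obtain ⟨s, hs⟩ := h3
  obtain ⟨t, ht⟩ := h4
  obtain ⟨v, hv⟩ := h5
  refine ⟨s - t + v * emk c d ^ ((l - 1) / 2), ?_⟩
  linear_combination hs - ht + emk c d ^ ((l - 1) / 2) * hv

lemma inert_mod_three {l : ℕ} (hl : l.Prime) (hp : Prime (l : Eis)) (h3 : IsCoprime (l : Eis) 3) :
    l % 3 = 2 := by
  have hne : l % 3 ≠ 0 := by
    intro h
    have : l = 3 := ((Nat.prime_dvd_prime_iff_eq Nat.prime_three hl).mp (Nat.dvd_of_mod_eq_zero h)).symm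
    subst this
    exact not_dvd_of_cop hp h3.symm (by norm_num)
  have hne1 : l % 3 ≠ 1 := by
    intro h
    have : Fact l.Prime := ⟨hl⟩
    have hcard : 3 ∣ Nat.card (ZMod l)ˣ := by
      rw [Nat.card_eq_fintype_card, ZMod.card_units]
      omega
    have : Fact (Nat.Prime 3) := ⟨Nat.prime_three⟩
    obtain ⟨g, hg⟩ := exists_prime_orderOf_dvd_card' 3 hcard
    have hg3 : g ^ 3 = 1 := by rw [← hg]; exact pow_orderOf_eq_one g
    have hg1 : g ≠ 1 := by
      rintro rfl
      simp at hg
    obtain ⟨z, hz⟩ := ZMod.intCast_surjective (g : ZMod l)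
    have h1 : (g : ZMod l) ^ 3 = 1 := by rw [← Units.val_pow_eq_pow_val, hg3, Units.val_one]
    have h2 : (g : ZMod l) - 1 ≠ 0 := by
      rw [sub_ne_zero]; simpa using hg1
    have h4 : (z : ZMod l) ^ 2 + z + 1 = 0 := by
      rw [hz]
      apply mul_left_cancel₀ h2
      linear_combination h1
    have h5 : (l : ℤ) ∣ z ^ 2 + z + 1 := by
      rw [← ZMod.intCast_zmod_eq_zero_iff_dvd]; push_cast; exact h4
    have h6 := int_dvd_cast h5
    have h7 : ((z ^ 2 + z + 1 : ℤ) : Eis) = emk z (-1) * emk (z + 1) 1 := by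
      rw [emk_mul, ← emk_int]; congr 1 <;> ring
    rw [h7] at h6
    have hl2 : (2 : ℤ) ≤ l := by exact_mod_cast hl.two_le
    rcases hp.dvd_or_dvd h6 with h8 | h8
    · have h9 := (int_dvd_emk (k := l) (a := z) (b := -1) (by rw [Int.cast_natCast]; exact h8)).2
      have := Int.le_of_dvd (by norm_num) ((dvd_neg).mp h9)
      omega
    · have := (int_dvd_emk (k := l) (by exact_mod_cast h8)).2
      have := Int.le_of_dvd (by norm_num) this
      omega
  omega

lemma frob {l : ℕ} (hl : l.Prime) (h : l % 3 = 2) (x : Eis) :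
    (l : Eis) ∣ x ^ (l + 1) - (Nm x : Eis) := by
  obtain ⟨c, d, rfl⟩ := exists_emk x
  have hN : (Nm (emk c d) : Eis) = emk c d * emk (c - d) (-d) := by
    rw [emk_conj, ← Nm_emk]; simp
  have hfer : ∀ k : ℤ, (l : Eis) ∣ (k : Eis) ^ l - (k : Eis) := by
    intro k
    have : Fact l.Prime := ⟨hl⟩
    have : (l : ℤ) ∣ k ^ l - k := by
      rw [← ZMod.intCast_zmod_eq_zero_iff_dvd]; push_cast; rw [ZMod.pow_card, sub_self]
    have := int_dvd_cast this
    push_cast at this; exact this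
  have htau : tauO ^ l = -1 - tauO := by
    obtain ⟨k, rfl⟩ : ∃ k, l = 3 * k + 2 := ⟨l / 3, by omega⟩
    rw [pow_add, pow_mul, tauO_cube, one_pow, one_mul, tauO_sq]
  obtain ⟨r, hr⟩ := exists_add_pow_prime_eq hl (c : Eis) ((d : Eis) * tauO)
  obtain ⟨s, hs⟩ := hfer c
  obtain ⟨t, ht⟩ := hfer d
  rw [hN, pow_succ]
  have key : (l : Eis) ∣ emk c d ^ l - emk (c - d) (-d) := by
    refine ⟨c * (d * tauO) * r + s + t * (-1 - tauO), ?_⟩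
    unfold emk
    rw [hr, mul_pow, htau]
    push_cast
    linear_combination hs + (-1 - tauO) * ht
  obtain ⟨k, hk⟩ := key
  exact ⟨k * emk c d, by linear_combination (emk c d) * hk⟩

lemma q_inert (hq : IsQuadSym q) {l : ℕ} (hl : l.Prime) {p u : Eis} (hp : Prime p)
    (h6 : IsCoprime p 6) (hN : Nm p = l ^ 2) (hu : IsUnit u) (hpu : p * u = (l : Eis)) {x : Eis}
    (hx : IsCoprime x p) :
    q x p = ((jacobiSym (Nm x) l : ℤ) : Eis) := by
  have h2 := cop_two h6
  have hass : Associated p (l : Eis) := ⟨hu.unit, by simpa using hpu⟩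
  have hpl := hass.dvd
  have hlp := hass.symm.dvd
  have hodd := odd_of_cop hl hp h2 hpl
  have h3 := inert_mod_three hl (hass.prime hp)
    (IsCoprime.of_isCoprime_of_dvd_left (cop_three h6) hlp)
  have hf := frob hl h3 x
  have hnd : ¬ (l : ℤ) ∣ (Nm x : ℤ) := by
    intro h
    have h1 := int_dvd_cast h
    have h4 : (l : Eis) ∣ x ^ (l + 1) := by
      rw [Int.cast_natCast] at h1
      exact (dvd_sub_left h1).mp hf
    exact not_dvd_of_cop hp hx (hp.dvd_of_dvd_pow (hpl.trans h4))
  refine q_unique hq hp h2 hx (jac_pm (jac_ne_zero_of_not_dvd hl hnd)) (hpl.trans ?_)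
  have e : (Nm p - 1) / 2 = (l + 1) * ((l - 1) / 2) := by
    rw [hN]
    obtain ⟨k, rfl⟩ : ∃ k, l = 2 * k + 1 := ⟨l / 2, by omega⟩
    have : (2 * k + 1) ^ 2 - 1 = 2 * ((2 * k + 1 + 1) * k) := by
      rw [show (2 * k + 1) ^ 2 = 2 * ((2 * k + 1 + 1) * k) + 1 by ring]; simp
    rw [this, Nat.mul_div_cancel_left _ (by norm_num)]
    congr 1; omega
  rw [e, pow_mul]
  have h4 := jac_pow hl hodd (Nm x : ℤ)
  rw [Int.cast_natCast] at h4
  have h5 := hf.trans (sub_dvd_pow_sub_pow _ _ ((l - 1) / 2))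
  convert dvd_sub h4 h5 using 1; ring

end

/-! ### quadratic reciprocity -/

lemma jac_core (a b c d : ℤ) (p r : ℕ) (hp1 : 1 < p) (hp : (p : ℤ) = a^2 - a*b + b^2)
    (hr : (r : ℤ) = c^2 - c*d + d^2) (ha : a % 4 = 1) (hb : 4 ∣ b) (hc : c % 2 = 0) (hd : d % 2 = 1)
    (h1 : jacobiSym (b * (b * c - a * d)) p ≠ 0) (h2 : jacobiSym (d * (d * a - c * b)) r ≠ 0) :
    jacobiSym (b * (b * c - a * d)) p = jacobiSym (d * (d * a - c * b)) r := by
  have hb0 : b ≠ 0 := by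
    rintro rfl
    rw [zero_mul] at h1
    exact h1 (jacobiSym.zero_left hp1)
  set m := d * a - c * b with hm
  have hm' : b * c - a * d = -m := by rw [hm]; ring
  rw [hm'] at h1 ⊢
  have hp4 : p % 4 = 1 := by
    obtain ⟨k, rfl⟩ := hb
    obtain ⟨j, rfl⟩ : ∃ j, a = 1 + 4 * j := ⟨a / 4, by omega⟩
    have : (p : ℤ) = 1 + 4 * (2 * j + 4 * j ^ 2 - (1 + 4 * j) * k + 4 * k^2) := by rw [hp]; ring
    omega
  have hr2 : Odd r := by
    obtain ⟨k, rfl⟩ : ∃ k, c = 2 * k := ⟨c / 2, by omega⟩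
    obtain ⟨j, rfl⟩ : ∃ j, d = 1 + 2 * j := ⟨d / 2, by omega⟩
    have : (r : ℤ) = 1 + 2 * (2 * k ^ 2 - k * (1 + 2 * j) + 2 * j + 2 * j^2) := by rw [hr]; ring
    exact Nat.odd_iff.mpr (by omega)
  have hdm : (d * m) % 4 = 1 := by
    obtain ⟨k, hk⟩ := hb
    obtain ⟨j, hj⟩ : ∃ j, a = 1 + 4 * j := ⟨a / 4, by omega⟩
    obtain ⟨i, hi⟩ : ∃ i, d = 1 + 2 * i := ⟨d / 2, by omega⟩
    have : d * m = 1 + 4 * (i + i ^ 2 + d ^ 2 * j - d * c * k) := by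
      rw [hm, hk, hj, hi]; ring
    omega
  have hm2 : m % 2 = 1 := by
    rcases Int.emod_two_eq_zero_or_one m with h | h
    · exfalso
      have : (d * m) % 2 = 0 := by rw [Int.mul_emod, h]; simp
      omega
    · exact h
  rw [jacobiSym.mul_left] at h1 ⊢
  rw [jac_b a b p hp hb hb0 (by omega) (left_ne_zero_of_mul h1), one_mul]
  have h1' := right_ne_zero_of_mul h1
  rw [jac_recip_odd (-m) p (by omega) hp4, Int.natAbs_neg] at h1' ⊢
  rw [jac_recip_one _ r hdm hr2, Int.natAbs_mul, jacobiSym.mul_right' _ (by omega) (by omega)] at h2 ⊢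
  have hrd : jacobiSym (r : ℤ) d.natAbs = jacobiSym c d.natAbs * jacobiSym c d.natAbs := by
    rw [← jacobiSym.mul_left]
    apply jac_congr
    rw [Int.natAbs_dvd, hr]
    exact ⟨d - c, by ring⟩
  have h3 := left_ne_zero_of_mul h2
  have h4 := right_ne_zero_of_mul h2
  rw [hrd] at h3
  rw [hrd, jac_sq_eq_one (left_ne_zero_of_mul h3), one_mul]
  have hpr : jacobiSym (p : ℤ) m.natAbs * jacobiSym (r : ℤ) m.natAbs =
      jacobiSym (c * (a - b) + b * d) m.natAbs * jacobiSym (c * (a - b) + b * d) m.natAbs := by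
    rw [← jacobiSym.mul_left, ← jacobiSym.mul_left]
    apply jac_congr
    rw [Int.natAbs_dvd, hr, hp]
    exact ⟨m - (c * (a - b) + b * d), by rw [hm]; ring⟩
  have h5 := mul_ne_zero h1' h4
  rw [hpr] at h5
  rw [jac_sq_eq_one (left_ne_zero_of_mul h5)] at hpr
  have h6 := jac_sq_eq_one h4
  linear_combination (jacobiSym (r : ℤ) m.natAbs) * hpr - (jacobiSym (p : ℤ) m.natAbs) * h6

section
variable {q : Eis → Eis → Eis}

lemma unit_cop {u x : Eis} (hu : IsUnit u) : IsCoprime u x :=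
  (isCoprime_one_left).of_isCoprime_of_dvd_left hu.dvd

lemma jac_of_q {s : Eis} {e : ℤ} {l : ℕ} (hs : s = 1 ∨ s = -1)
    (h : s = ((jacobiSym e l : ℤ) : Eis)) : jacobiSym e l ≠ 0 := by
  intro h0
  rw [h0] at h
  rcases hs with rfl | rfl <;> simp at h

lemma isUnit_tauO : IsUnit tauO := IsUnit.of_mul_eq_one (tauO ^ 2) (by rw [← tauO_cube]; ring)

lemma normalize_emk {r : Eis} (h2 : ¬ (2 : Eis) ∣ r) :
    ∃ u c d, IsUnit u ∧ u * r = emk c d ∧ c % 2 = 0 ∧ d % 2 = 1 := by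
  obtain ⟨c, d, rfl⟩ := exists_emk r
  have ht : tauO = emk 0 1 := by simp [emk]
  rcases Int.emod_two_eq_zero_or_one c with hc | hc <;>
    rcases Int.emod_two_eq_zero_or_one d with hd | hd
  · exfalso
    apply h2
    refine ⟨emk (c / 2) (d / 2), ?_⟩
    have : (2 : Eis) = emk 2 0 := by simp [emk]
    rw [this, emk_mul]
    congr 1 <;> omega
  · exact ⟨1, c, d, isUnit_one, one_mul _, hc, hd⟩
  · refine ⟨tauO, _, _, isUnit_tauO, by rw [ht, emk_mul], ?_, ?_⟩ <;> omega
  · refine ⟨tauO * tauO, _, _, isUnit_tauO.mul isUnit_tauO, by rw [ht, emk_mul, emk_mul], ?_, ?_⟩ <;> omega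

lemma recip_normal (hq : IsQuadSym q) {w : Eis} (hw : Prime w) (h12 : (12 : Eis) ∣ w - 1)
    {c d : ℤ} (hr : Prime (emk c d)) (h6 : IsCoprime (emk c d) 6) (hc : c % 2 = 0) (hd : d % 2 = 1)
    (hcop : IsCoprime w (emk c d)) : q w (emk c d) = q (emk c d) w := by
  obtain ⟨a, b, rfl, ha, hb⟩ := coords_of_cong h12
  have w6 := cop_of_cong h12
  have w2 := cop_two w6
  have r2 := cop_two h6
  have hNw := Nm_cong h12
  have qw := q_pm hq hw w2 hcop.symm
  have qr := q_pm hq hr r2 hcop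
  obtain ⟨l, hl, hlN⟩ := prime_class hw
  obtain ⟨k, hk, hkN⟩ := prime_class hr
  have hko : k % 2 = 1 := by
    refine odd_of_cop hk hr r2 ?_
    rcases hkN with h | ⟨-, u, -, hu⟩
    · rw [← h]; exact dvd_Nm _
    · exact ⟨u, hu.symm⟩
  have hlo : l % 2 = 1 := by
    refine odd_of_cop hl hw w2 ?_
    rcases hlN with h | ⟨-, u, -, hu⟩
    · rw [← h]; exact dvd_Nm _
    · exact ⟨u, hu.symm⟩
  rcases hlN with hlN | ⟨hlN, u, hu, hlu⟩ <;> rcases hkN with hkN | ⟨hkN, v, hv, hkv⟩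
  · have e1 := q_split hq hl a b c d hw w2 hlN hcop.symm
    have e2 := q_split hq hk c d a b hr r2 hkN hcop
    have hp := Nm_emk a b
    have hr' := Nm_emk c d
    rw [hlN] at hp
    rw [hkN] at hr'
    rw [e1, e2, jac_core a b c d l k hl.one_lt hp hr' (by omega) (by omega) hc hd
      (jac_of_q qw e1) (jac_of_q qr e2)]
  · -- r inert
    rw [q_inert hq hk hr h6 hkN hv hkv hcop, hlN]
    have e0 : q (emk c d) (emk a b) = q (k : Eis) (emk a b) := by
      rw [← hkv, q_mul hq hw w2 hcop.symm (unit_cop hv), q_unit_num hq hw h12 hv, mul_one]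
    have hkc : IsCoprime (emk (k : ℤ) 0) (emk a b) := by
      rw [emk_int, Int.cast_natCast, ← hkv]
      exact hcop.symm.mul_left (unit_cop hv)
    have e1 := q_split hq hl a b k 0 hw w2 hlN hkc
    rw [emk_int, Int.cast_natCast] at e1 hkc
    have e2 := jac_of_q (q_pm hq hw w2 hkc) e1
    rw [e0, e1]
    have e3 : b * (b * (k : ℤ) - a * 0) = b * b * k := by ring
    rw [e3, jacobiSym.mul_left, jacobiSym.mul_left] at e2 ⊢
    rw [jac_sq_eq_one (left_ne_zero_of_mul (left_ne_zero_of_mul e2)), one_mul,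
      jacobiSym.quadratic_reciprocity_one_mod_four (a := l) (b := k) (by omega) (Nat.odd_iff.mpr hko)]
  · -- w inert
    rw [q_inert hq hl hw w6 hlN hu hlu hcop.symm, hkN]
    have e1 := q_split hq hk c d a b hr r2 hkN hcop
    have e2 := jac_of_q qr e1
    -- b = 0
    have hb0 : b = 0 ∧ a.natAbs = l := by
      have h1 : (l : Eis) ∣ emk a b := by
        obtain ⟨u', hu'⟩ := hu.exists_right_inv
        exact ⟨u', by rw [← hlu, mul_assoc, hu', mul_one]⟩
      obtain ⟨⟨i, hi⟩, ⟨j, hj⟩⟩ := int_dvd_emk (k := l) (by rw [Int.cast_natCast]; exact h1)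
      have hn := Nm_emk a b
      rw [hlN, hi, hj] at hn
      have hl0 : (l : ℤ) ^ 2 ≠ 0 := by
        have := hl.ne_zero
        positivity
      have hn1 : i ^ 2 - i * j + j ^ 2 = 1 := by
        apply mul_left_cancel₀ hl0
        push_cast at hn
        linear_combination -hn
      have hj4 : 4 ∣ j := by
        have h4 : (4 : ℤ) ∣ l * j := by rw [← hj]; omega
        refine IsCoprime.dvd_of_dvd_mul_left ?_ h4
        rw [Int.isCoprime_iff_gcd_eq_one]
        have : Nat.Coprime 4 l := by
          rw [show 4 = 2 ^ 2 by norm_num]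
          exact Nat.Coprime.pow_left 2 (Nat.coprime_two_left.mpr (Nat.odd_iff.mpr hlo))
        simpa [Int.gcd] using this
      have hj1 : j ≤ 1 := by nlinarith [sq_nonneg (2*i - j)]
      have hj2 : -1 ≤ j := by nlinarith [sq_nonneg (2*i - j)]
      have hj0 : j = 0 := by omega
      subst hj0
      have hi1 : i * i = 1 := by linarith
      refine ⟨by simpa using hj, ?_⟩
      rcases mul_self_eq_one_iff.mp hi1 with rfl | rfl <;> rw [hi] <;> simp
    obtain ⟨rfl, hal⟩ := hb0
    rw [e1]
    have e3 : d * (d * a - c * 0) = d * d * a := by ring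
    rw [e3, jacobiSym.mul_left, jacobiSym.mul_left] at e2 ⊢
    rw [jac_sq_eq_one (left_ne_zero_of_mul (left_ne_zero_of_mul e2)), one_mul,
      jac_recip_one a k (by omega) (Nat.odd_iff.mpr hko), hal]
  · have e1 := q_inert hq hl hw w6 hlN hu hlu hcop.symm
    have e2 := q_inert hq hk hr h6 hkN hv hkv hcop
    have f1 := jac_of_q qw e1
    have f2 := jac_of_q qr e2
    rw [hkN] at e1 f1
    rw [hlN] at e2 f2
    rw [e1, e2]
    push_cast at f1 f2 ⊢
    rw [pow_two, jacobiSym.mul_left] at f1 f2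
    rw [pow_two, pow_two, jacobiSym.mul_left, jacobiSym.mul_left,
      jac_sq_eq_one (left_ne_zero_of_mul f1), jac_sq_eq_one (left_ne_zero_of_mul f2)]

lemma recip (hq : IsQuadSym q) {w : Eis} (hw : Prime w) (h12 : (12 : Eis) ∣ w - 1)
    {r : Eis} (hr : Prime r) (h6 : IsCoprime r 6)
    (hcop : IsCoprime w r) : q w r = q r w := by
  have h2 : ¬ (2 : Eis) ∣ r := by
    intro h
    have hu : IsUnit (2 : Eis) := (cop_two h6).isUnit_of_dvd' h dvd_rfl
    have := Nm_unit hu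
    have h3 := Nm_nat 2
    push_cast at h3
    omega
  obtain ⟨u, c, d, hu, he, hc, hd⟩ := normalize_emk h2
  have hass : Associated r (emk c d) := ⟨hu.unit, by rw [← he, mul_comm]; simp⟩
  have hr' := hass.prime hr
  have h := recip_normal hq hw h12 hr'
    (h6.of_isCoprime_of_dvd_left hass.symm.dvd) hc hd
    (hcop.of_isCoprime_of_dvd_right hass.symm.dvd)
  rw [← he, hq.1, hq.2.1 _ _ hu, one_mul,
    q_mul hq hw (cop_two (cop_of_cong h12)) (unit_cop hu) hcop.symm, q_unit_num hq hw h12 hu,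
    one_mul] at h
  exact h

lemma q_prod_num (hq : IsQuadSym q) {ι : Type} (T : Finset ι) (f : ι → Eis) {p : Eis}
    (hp : Prime p) (h2 : IsCoprime p 2) (hf : ∀ k ∈ T, IsCoprime (f k) p) :
    q (∏ k ∈ T, f k) p = ∏ k ∈ T, q (f k) p := by
  classical
  induction T using Finset.induction_on with
  | empty =>
    simp only [Finset.prod_empty]
    exact q_unique hq hp h2 isCoprime_one_left (Or.inl rfl) (by simp)
  | insert i s hi ih =>
    rw [Finset.prod_insert hi, Finset.prod_insert hi, q_mul hq hp h2
      (hf i (Finset.mem_insert_self _ _))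
      (IsCoprime.prod_left fun k hk => hf k (Finset.mem_insert_of_mem hk)),
      ih fun k hk => hf k (Finset.mem_insert_of_mem hk)]

lemma q_prod_den (hq : IsQuadSym q) {ι : Type} (T : Finset ι) (f : ι → Eis) (x : Eis) :
    q x (∏ k ∈ T, f k) = ∏ k ∈ T, q x (f k) := by
  classical
  induction T using Finset.induction_on with
  | empty => simpa using hq.2.1 x 1 isUnit_one
  | insert i s hi ih => rw [Finset.prod_insert hi, Finset.prod_insert hi, hq.1, ih]

lemma recip_full (hq : IsQuadSym q) {ι : Type} (T : Finset ι) (f : ι → Eis)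
    (hf : ∀ k, Prime (f k)) (hf12 : ∀ k, (12 : Eis) ∣ f k - 1) (y : Eis) (hy0 : y ≠ 0) :
    IsCoprime y 6 → (∀ k ∈ T, IsCoprime (f k) y) →
    q (∏ k ∈ T, f k) y = ∏ k ∈ T, q y (f k) := by
  induction y using UniqueFactorizationMonoid.induction_on_prime with
  | h₁ => exact absurd rfl hy0
  | h₂ x hx =>
    intro _ _
    rw [hq.2.1 _ _ hx, Finset.prod_eq_one]
    intro k _
    exact q_unit_num hq (hf k) (hf12 k) hx
  | h₃ a p ha hp ih =>
    intro h6 hc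
    have hpf : ∀ k ∈ T, IsCoprime (f k) p := fun k hk => (hc k hk).of_mul_right_left
    have haf : ∀ k ∈ T, IsCoprime (f k) a := fun k hk => (hc k hk).of_mul_right_right
    rw [hq.1, ih ha h6.of_mul_left_right haf,
      q_prod_num hq T f hp (cop_two h6.of_mul_left_left) hpf, ← Finset.prod_mul_distrib]
    apply Finset.prod_congr rfl
    intro k hk
    rw [recip hq (hf k) (hf12 k) hp h6.of_mul_left_left (hpf k hk),
      q_mul hq (hf k) (cop_two (cop_of_cong (hf12 k))) (hpf k hk).symm (haf k hk).symm]

end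

/-- From the **proof of Theorem 1.1** in [Qiu] (an instance of quadratic reciprocity in
`K = ℚ(√−3)`): with `D = π₁⋯πₙ` (`πₖ ≡ 1 (mod 12)` distinct primes of `ℤ[τ]`), `D_T` a
subproduct of the `πₖ`, and `c ∈ O_K` relatively prime to `D`, one has
`(D_T/(6c+D))₂ = (2c/D_T)₂` for the quadratic residue symbol of `K`. -/
theorem quadratic_symbol_flip
    (n : ℕ) (prm : Fin n → Eis)
    (hprime : ∀ k, Prime (prm k))
    (hdistinct : ∀ j k, j ≠ k → prm j ≠ prm k)
    (hcong : ∀ k, (12 : Eis) ∣ (prm k - 1))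
    (T : Finset (Fin n))
    (D DT : Eis) (hD : D = ∏ k, prm k) (hDT : DT = ∏ k ∈ T, prm k)
    (c : Eis) (hc : IsCoprime c D)
    (quadSym : Eis → Eis → Eis) (hquad : IsQuadSym quadSym) :
    quadSym DT (6 * c + D) = quadSym (2 * c) DT := by
  subst hD hDT
  have hD6 : IsCoprime (∏ k, prm k) 6 := IsCoprime.prod_left fun k _ => cop_of_cong (hcong k)
  set D := ∏ k, prm k with hDdef
  have hDk : ∀ k, prm k ∣ D := fun k => Finset.dvd_prod_of_mem _ (Finset.mem_univ k)
  have hck : ∀ k, IsCoprime c (prm k) := fun k => hc.of_isCoprime_of_dvd_right (hDk k)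
  have h6k : ∀ k, IsCoprime 6 (prm k) := fun k => (cop_of_cong (hcong k)).symm
  have hy6 : IsCoprime (6 * c + D) 6 := by
    have := (IsCoprime.add_mul_left_left hD6 c)
    rwa [add_comm] at this
  have hyk : ∀ k, IsCoprime (6 * c + D) (prm k) := by
    intro k
    obtain ⟨e, he⟩ := hDk k
    rw [he]
    exact IsCoprime.add_mul_left_left ((h6k k).mul_left (hck k)) e
  have hy0 : 6 * c + D ≠ 0 := by
    intro h
    rw [h] at hy6
    have hu : IsUnit (6 : Eis) := isCoprime_zero_left.mp hy6
    have h1 := Nm_unit hu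
    have h3 := Nm_nat 6
    push_cast at h3
    omega
  rw [recip_full hquad T prm hprime hcong _ hy0 hy6 (fun k _ => (hyk k).symm),
    q_prod_den hquad]
  apply Finset.prod_congr rfl
  intro k _
  have h2 := cop_two (cop_of_cong (hcong k))
  have h3 := cop_three (cop_of_cong (hcong k))
  rw [q_congr hquad (hprime k) h2 (hyk k) (h3.symm.mul_left (h2.symm.mul_left (hck k)))
    (by convert hDk k using 1; ring),
    q_mul hquad (hprime k) h2 h3.symm (h2.symm.mul_left (hck k)), q_three hquad (hprime k) (hcong k),
    one_mul]
end
end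

section
/- For the Weierstrass zeta function of the lattice L_ω = ω·ℤ[τ] with invariants g₂ = 0, g₃ = 1, one has ζ(ω/2, L_ω) = π/(√3·ω), ζ(ω/3, L_ω) = 2π/(3√3·ω) + 1/√3, and ζ(2ω/3, L_ω) = 4π/(3√3·ω) − 1/√3. -/
noncomputable section

open Complex Real ComplexConjugate

namespace WZ
open PeriodPair Filter Topology

variable (L : PeriodPair)

/-- zeta with the `0`-term missing -/
def zE (z : ℂ) : ℂ :=
  ∑' l : L.lattice, if l.1 = 0 then 0 else (1 / (z - l.1) + 1 / l.1 + z / l.1 ^ 2)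

lemma zE_bound (r : ℝ) (s : ℂ) (hs : ‖s‖ < r) (l : ℂ) (h : 2 * r ≤ ‖l‖) :
    ‖1 / (s - l) + 1 / l + s / l ^ 2‖ ≤ 2 * r ^ 2 * ‖l‖ ^ (-3 : ℝ) := by
  have hr : 0 < r := (norm_nonneg s).trans_lt hs
  have hl : 0 < ‖l‖ := by linarith
  have hl0 : l ≠ 0 := norm_pos_iff.mp hl
  have hsl : s - l ≠ 0 := by
    intro e; rw [sub_eq_zero] at e; subst e; linarith
  have h2 : ‖l‖ / 2 ≤ ‖s - l‖ := by
    rw [norm_sub_rev]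
    exact .trans (by linarith) (norm_sub_norm_le l s)
  calc ‖1 / (s - l) + 1 / l + s / l ^ 2‖ = ‖s ^ 2 / ((s - l) * l ^ 2)‖ := by
        congr 1; field_simp; ring
    _ = ‖s‖ ^ 2 / (‖s - l‖ * ‖l‖ ^ 2) := by simp
    _ ≤ r ^ 2 / ((‖l‖ / 2) * ‖l‖ ^ 2) := by gcongr
    _ = 2 * r ^ 2 / ‖l‖ ^ 3 := by field
    _ = _ := by norm_cast

lemma zE_hasSumLU :
    HasSumLocallyUniformly
      (fun (l : L.lattice) (z : ℂ) ↦
        if l.1 = 0 then 0 else (1 / (z - l.1) + 1 / l.1 + z / l.1 ^ 2)) (zE L) := by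
  refine L.hasSumLocallyUniformly_aux (u := fun r l ↦ 2 * r ^ 2 * ‖l‖ ^ (-3 : ℝ)) _
    (fun _ _ ↦ (ZLattice.summable_norm_rpow _ _ (by simp; norm_num)).mul_left _) fun r hr ↦
    Filter.eventually_atTop.mpr ⟨2 * r, ?_⟩
  rintro _ h s hs l rfl
  split_ifs
  · simpa using! show 0 ≤ 2 * r ^ 2 * (‖↑l‖ ^ 3)⁻¹ by positivity
  · exact zE_bound r s hs l h

lemma zE_hasSum (z : ℂ) : HasSum (fun (l : L.lattice) ↦
        if l.1 = 0 then 0 else (1 / (z - l.1) + 1 / l.1 + z / l.1 ^ 2)) (zE L z) :=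
  (zE_hasSumLU L).hasSum

lemma zE_diffOn : DifferentiableOn ℂ (zE L) (L.lattice \ {0})ᶜ := by
  refine (zE_hasSumLU L).hasSumLocallyUniformlyOn.differentiableOn
    (.of_forall fun s ↦ .fun_sum fun i hi ↦ ?_) L.isOpen_compl_lattice_sdiff
  split_ifs with h
  · simp
  · refine .add (.add (.div (by fun_prop) (by fun_prop) fun x hx ↦ ?_) (by fun_prop)) (by fun_prop)
    have : x ≠ i := by rintro rfl; simp_all
    simpa [sub_eq_zero]

lemma zE_deriv : Set.EqOn (deriv (zE L)) (fun z ↦ -L.weierstrassPExcept 0 z)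
    (L.lattice \ {0})ᶜ := by
  refine ((zE_hasSumLU L).tendstoLocallyUniformlyOn.deriv
    (.of_forall fun s ↦ ?_) L.isOpen_compl_lattice_sdiff).unique ?_
  · refine .fun_sum fun i hi ↦ ?_
    split_ifs with h
    · simp
    refine .add (.add (.div (by fun_prop) (by fun_prop) fun x hx ↦ ?_) (by fun_prop)) (by fun_prop)
    have : x ≠ i := by rintro rfl; simp_all
    simpa [sub_eq_zero]
  · have := (L.hasSumLocallyUniformly_weierstrassPExcept 0).tendstoLocallyUniformlyOn
      (s := (L.lattice \ {0})ᶜ)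
    refine this.neg.congr ?_
    intro s z hz
    simp only [Function.comp_apply, Pi.neg_apply]
    have key : ∀ i : L.lattice, HasDerivAt (fun z : ℂ ↦
        if i.1 = 0 then 0 else (1 / (z - i.1) + 1 / i.1 + z / i.1 ^ 2))
        (-(if i.1 = 0 then 0 else (1 / (z - i.1) ^ 2 - 1 / i.1 ^ 2))) z := by
      intro i
      split_ifs with h
      · simpa using hasDerivAt_const z (0:ℂ)
      · have hne : z - i ≠ 0 := fun e ↦ h (by
          obtain rfl := sub_eq_zero.mp e
          simpa using hz)
        have h1 := (((hasDerivAt_id z).sub_const i.1).inv hne)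
        have h2 := ((h1.add_const (1 / i.1)).add ((hasDerivAt_id z).div_const (i.1 ^ 2)))
        refine (h2.congr_of_eventuallyEq (.of_forall fun w ↦ ?_)).congr_deriv ?_
        · simp
        · simp; ring
    rw [← Finset.sum_neg_distrib]
    exact ((HasDerivAt.fun_sum fun i _ ↦ key i).deriv).symm

lemma zE_hasDerivAt {z : ℂ} (hz : z ∈ ((L.lattice : Set ℂ) \ {0})ᶜ) :
    HasDerivAt (zE L) (-L.weierstrassPExcept 0 z) z := by
  have := ((zE_diffOn L).differentiableAt (L.isOpen_compl_lattice_sdiff.mem_nhds hz)).hasDerivAt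
  rwa [zE_deriv L hz] at this

lemma zE_neg (z : ℂ) : zE L (-z) = - zE L z := by
  simp only [zE]
  rw [← (Equiv.neg L.lattice).tsum_eq, ← tsum_neg]
  congr! 2 with l
  simp only [Equiv.neg_apply, NegMemClass.coe_neg, neg_eq_zero]
  split_ifs
  · simp
  · rw [show -z - -l.1 = -(z - l.1) by ring, neg_sq]
    simp only [div_neg, neg_div]; ring

lemma zE_zero : zE L 0 = 0 := by
  have := zE_neg L 0
  rw [neg_zero] at this
  exact self_eq_neg.mp this

/-- Weierstrass zeta -/
def wz (z : ℂ) : ℂ := 1 / z + zE L z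

lemma wz_neg (z : ℂ) : wz L (-z) = - wz L z := by
  simp only [wz, zE_neg, div_neg]; ring

lemma wP_eq (z : ℂ) : L.weierstrassP z = 1 / z ^ 2 + L.weierstrassPExcept 0 z := by
  have := L.weierstrassPExcept_add 0 z
  simp at this
  rw [← this]; simp; ring

lemma wz_hasDerivAt {z : ℂ} (hz : z ∉ L.lattice) :
    HasDerivAt (wz L) (-L.weierstrassP z) z := by
  have hz0 : z ≠ 0 := by rintro rfl; exact hz (zero_mem _)
  have h := (hasDerivAt_inv hz0).add (zE_hasDerivAt L (z := z) (by simp [hz]))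
  rw [wP_eq]
  refine (h.congr_of_eventuallyEq (.of_forall fun w ↦ ?_)).congr_deriv ?_
  · simp [wz]
  · simp; ring

lemma lattice_compl_preconnected : IsPreconnected ((L.lattice : Set ℂ)ᶜ) := by
  have hc : (L.lattice : Set ℂ).Countable := by
    have : Countable L.lattice := L.latticeEquivProd.toEquiv.countable_iff.mpr inferInstance
    exact Set.countable_coe_iff.mp this
  exact (hc.isConnected_compl_of_one_lt_rank (by simp [Complex.rank_real_complex])).isPreconnected

lemma add_mem_iff' (l : L.lattice) (z : ℂ) : z + l ∈ L.lattice ↔ z ∈ L.lattice :=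
  L.lattice.toAddSubgroup.add_mem_cancel_right (y := z) l.2

lemma wz_add_const (l : L.lattice) : ∃ c, ∀ z ∉ L.lattice, wz L (z + l) = wz L z + c := by
  have hopen : IsOpen ((L.lattice : Set ℂ)ᶜ) := L.isClosed_lattice.isOpen_compl
  have hd : ∀ z ∈ ((L.lattice : Set ℂ)ᶜ),
      HasDerivAt (fun z ↦ wz L (z + l) - wz L z) 0 z := by
    intro z hz
    have h1 := (wz_hasDerivAt L (z := z + l) (by rwa [add_mem_iff'])).comp_add_const z l.1
    have h2 := h1.fun_sub (wz_hasDerivAt L hz)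
    exact h2.congr_deriv (by simp)
  obtain ⟨c, hc⟩ := hopen.exists_is_const_of_deriv_eq_zero (lattice_compl_preconnected L)
    (fun z hz ↦ (hd z hz).differentiableAt.differentiableWithinAt) (fun z hz ↦ (hd z hz).deriv)
  exact ⟨c, fun z hz ↦ by rw [← hc z hz]; ring⟩

end WZ

namespace WZ
open PeriodPair Filter Topology

variable (L : PeriodPair)

def af (u z : ℂ) : ℂ := (wz L (z + u) - wz L z - wz L u) ^ 2
  - L.weierstrassP (z + u) - L.weierstrassP z - L.weierstrassP u

open Classical in
def aF (u z : ℂ) : ℂ := if z ∈ L.lattice ∨ z + u ∈ L.lattice then 0 else af L u z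

lemma aF_pos {u z : ℂ} (h : z ∈ L.lattice ∨ z + u ∈ L.lattice) : aF L u z = 0 := if_pos h

lemma aF_of_not {u z : ℂ} (h : ¬ (z ∈ L.lattice ∨ z + u ∈ L.lattice)) : aF L u z = af L u z :=
  if_neg h

lemma aF_per (u z : ℂ) (l : L.lattice) : aF L u (z + l) = aF L u z := by
  have h1 : z + l ∈ L.lattice ↔ z ∈ L.lattice := add_mem_iff' L l z
  have h2 : z + l + u ∈ L.lattice ↔ z + u ∈ L.lattice := by
    rw [add_right_comm]; exact add_mem_iff' L l _
  by_cases h : z ∈ L.lattice ∨ z + u ∈ L.lattice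
  · rw [aF_pos L h, aF_pos L (by rwa [h1, h2])]
  rw [aF_of_not L h, aF_of_not L (by rwa [h1, h2])]
  push Not at h
  obtain ⟨c, hc⟩ := wz_add_const L l
  unfold af
  rw [hc z h.1, add_right_comm, hc _ h.2, weierstrassP_add_coe, weierstrassP_add_coe]
  ring

lemma neg_mem_iff' (z : ℂ) : -z ∈ L.lattice ↔ z ∈ L.lattice := Submodule.neg_mem_iff _

lemma aF_symm (u z : ℂ) : aF L u (-u - z) = aF L u z := by
  have e1 : -u - z = -(z + u) := by ring
  have e3 : -(z + u) + u = -z := by ring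
  rw [e1]
  by_cases h : z ∈ L.lattice ∨ z + u ∈ L.lattice
  · rw [aF_pos L h, aF_pos L (by rwa [e3, neg_mem_iff', neg_mem_iff', or_comm])]
  rw [aF_of_not L h, aF_of_not L (by rwa [e3, neg_mem_iff', neg_mem_iff', or_comm])]
  unfold af
  rw [e3, wz_neg, wz_neg, weierstrassP_neg, weierstrassP_neg]
  ring

lemma wP_hasDerivAt {z : ℂ} (hz : z ∉ L.lattice) :
    HasDerivAt L.weierstrassP (deriv L.weierstrassP z) z :=
  (L.analyticOnNhd_weierstrassP z hz).differentiableAt.hasDerivAt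

lemma wP_diffAt {z : ℂ} (hz : z ∉ L.lattice) : DifferentiableAt ℂ L.weierstrassP z :=
  (L.analyticOnNhd_weierstrassP z hz).differentiableAt

lemma aF_diffAt (u z : ℂ) (h1 : z ∉ L.lattice) (h2 : z + u ∉ L.lattice) :
    DifferentiableAt ℂ (aF L u) z := by
  have hd : DifferentiableAt ℂ (af L u) z := by
    have a1 := (wz_hasDerivAt L h1).differentiableAt
    have a2 := ((wz_hasDerivAt L h2).comp_add_const z u).differentiableAt
    have a3 := wP_diffAt L h1
    have a4 : DifferentiableAt ℂ (fun z ↦ L.weierstrassP (z + u)) z :=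
      ((wP_hasDerivAt L h2).comp_add_const z u).differentiableAt
    unfold af
    fun_prop
  refine hd.congr_of_eventuallyEq ?_
  have o1 : ∀ᶠ w in 𝓝 z, w ∉ L.lattice := L.isClosed_lattice.isOpen_compl.mem_nhds h1
  have o2 : ∀ᶠ w in 𝓝 z, w + u ∉ L.lattice :=
    (continuous_add_const u).continuousAt.eventually
      (L.isClosed_lattice.isOpen_compl.mem_nhds h2)
  filter_upwards [o1, o2] with w hw1 hw2
  simp [aF, hw1, hw2]

lemma aF_punct (u : ℂ) (hu : u ∉ L.lattice) :
    ∀ᶠ z in 𝓝[≠] 0, z ∉ L.lattice ∧ z + u ∉ L.lattice := by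
  have o1 : ∀ᶠ w in 𝓝[≠] (0:ℂ), w ∈ ((L.lattice : Set ℂ) \ {0})ᶜ :=
    mem_nhdsWithin_of_mem_nhds (L.compl_lattice_sdiff_singleton_mem_nhds _)
  have o2 : ∀ᶠ w in 𝓝[≠] (0:ℂ), w + u ∉ L.lattice :=
    (((continuous_add_const u).continuousAt (x := 0)).eventually
      (L.isClosed_lattice.isOpen_compl.mem_nhds (by simpa using hu))).filter_mono
        nhdsWithin_le_nhds
  filter_upwards [o1, o2, self_mem_nhdsWithin] with w hw1 hw2 hw3
  refine ⟨fun h ↦ hw1 ⟨h, hw3⟩, hw2⟩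

lemma aF_cont0 (u : ℂ) (hu : u ∉ L.lattice) : ContinuousAt (aF L u) 0 := by
  have h00 : aF L u 0 = 0 := by simp [aF]
  rw [continuousAt_iff_punctured_nhds, h00]
  have h0 : (0:ℂ) ∈ ((L.lattice : Set ℂ) \ {0})ᶜ := by simp
  set h : ℂ → ℂ := fun z ↦ wz L (z + u) - wz L u - zE L z with hh
  have hd : HasDerivAt h (-L.weierstrassP u) 0 := by
    have a1 := (wz_hasDerivAt L (z := 0 + u) (by simpa using hu)).comp_add_const 0 u
    have a2 := ((a1.sub_const (wz L u)).fun_sub (zE_hasDerivAt L h0))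
    exact a2.congr_deriv (by simp)
  have hh0 : h 0 = 0 := by simp [hh, zE_zero]
  have hs := hd.tendsto_slope
  have c1 : Tendsto h (𝓝[≠] 0) (𝓝 0) := by
    have := hd.continuousAt.tendsto.mono_left (nhdsWithin_le_nhds (s := {0}ᶜ))
    rwa [hh0] at this
  have c2 : Tendsto (fun z ↦ L.weierstrassP (z + u)) (𝓝[≠] 0) (𝓝 (L.weierstrassP u)) := by
    have : ContinuousAt (fun z ↦ L.weierstrassP (z + u)) 0 :=
      ((wP_hasDerivAt L (z := 0 + u) (by simpa using hu)).comp_add_const 0 u).continuousAt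
    have := this.tendsto.mono_left (nhdsWithin_le_nhds (s := {0}ᶜ))
    simpa using this
  have c3 : Tendsto (L.weierstrassPExcept 0) (𝓝[≠] 0) (𝓝 0) := by
    have := (L.analyticAt_weierstrassPExcept 0).continuousAt.tendsto.mono_left
      (nhdsWithin_le_nhds (s := {0}ᶜ))
    simpa using this
  have key := ((((hs.const_mul (-2)).add (c1.pow 2)).sub c2).sub c3).sub
    (tendsto_const_nhds (x := L.weierstrassP u))
  have e : -2 * -L.weierstrassP u + 0 ^ 2 - L.weierstrassP u - 0 - L.weierstrassP u = 0 := by ring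
  rw [e] at key
  refine key.congr' ?_
  filter_upwards [aF_punct L u hu, self_mem_nhdsWithin] with z hz hz0
  have hz0 : z ≠ 0 := hz0
  simp only [aF, hz.1, hz.2, or_self, if_false, af]
  rw [slope_def_field, hh0, wP_eq L z]
  have : wz L (z + u) - wz L z - wz L u = h z - 1 / z := by
    simp only [hh, wz]; ring
  rw [this]
  field_simp
  ring

lemma aF_diffAt0 (u : ℂ) (hu : u ∉ L.lattice) : DifferentiableAt ℂ (aF L u) 0 := by
  refine (Complex.analyticAt_of_differentiable_on_punctured_nhds_of_continuousAt ?_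
    (aF_cont0 L u hu)).differentiableAt
  filter_upwards [aF_punct L u hu] with z hz
  exact aF_diffAt L u z hz.1 hz.2

lemma aF_diffAtL (u : ℂ) (hu : u ∉ L.lattice) (z : ℂ) (hz : z ∈ L.lattice) :
    DifferentiableAt ℂ (aF L u) z := by
  have : aF L u = fun w ↦ aF L u (w - z) := by
    ext w
    have := aF_per L u (w - z) ⟨z, hz⟩
    simpa using this
  rw [this]
  have h := aF_diffAt0 L u hu
  rw [← sub_self z] at h
  exact DifferentiableAt.comp (f := fun w ↦ w - z) z h (by fun_prop)

lemma aF_diff (u : ℂ) (hu : u ∉ L.lattice) : Differentiable ℂ (aF L u) := by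
  intro z
  by_cases h1 : z ∈ L.lattice
  · exact aF_diffAtL L u hu z h1
  by_cases h2 : z + u ∈ L.lattice
  · have : aF L u = fun w ↦ aF L u (-u - w) := by
      ext w; exact (aF_symm L u w).symm
    rw [this]
    have h := aF_diffAtL L u hu (-u - z) (by
      rw [show -u - z = -(z + u) by ring, neg_mem_iff']; exact h2)
    exact DifferentiableAt.comp z h (by fun_prop)
  · exact aF_diffAt L u z h1 h2

theorem add_formula (u z : ℂ) (hu : u ∉ L.lattice) (hz : z ∉ L.lattice) (hzu : z + u ∉ L.lattice) :
    (wz L (z + u) - wz L z - wz L u) ^ 2 =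
      L.weierstrassP (z + u) + L.weierstrassP z + L.weierstrassP u := by
  have hd := aF_diff L u hu
  have : aF L u z = aF L u 0 :=
    hd.apply_eq_apply_of_bounded (IsZLattice.isCompact_range_of_periodic L.lattice _
      hd.continuous fun z w hw ↦ aF_per L u z ⟨w, hw⟩).isBounded z 0
  simp only [aF, hz, hzu, or_self, if_false, af, zero_mem, true_or, if_true] at this
  linear_combination this

end WZ

namespace WZ
open PeriodPair Filter Topology

lemma telesc (H : ℤ → ℂ) (hs : Summable fun n ↦ H n - H (n + 1))
    (h1 : Tendsto (fun n : ℕ ↦ H n) atTop (𝓝 0))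
    (h2 : Tendsto (fun n : ℕ ↦ H (-n)) atTop (𝓝 0)) :
    HasSum (fun n ↦ H n - H (n + 1)) 0 := by
  have a1 : HasSum (fun n : ℕ ↦ H n - H (n + 1)) (H 0) := by
    have hs1 : Summable (fun n : ℕ ↦ H n - H (n + 1)) :=
      hs.comp_injective (i := fun n : ℕ ↦ (n : ℤ)) Nat.cast_injective
    rw [hs1.hasSum_iff_tendsto_nat]
    have : ∀ N : ℕ, ∑ n ∈ Finset.range N, (H n - H (n + 1)) = H 0 - H N := by
      intro N
      have := Finset.sum_range_sub' (fun n : ℕ ↦ H n) N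
      simpa using this
    simp_rw [this]
    have := h1.const_sub (H 0)
    rwa [sub_zero] at this
  have a2 : HasSum (fun n : ℕ ↦ H (-(n + 1)) - H (-(n + 1) + 1)) (- H 0) := by
    have hs1 : Summable (fun n : ℕ ↦ H (-(n + 1)) - H (-(n + 1) + 1)) :=
      hs.comp_injective (i := fun n : ℕ ↦ (-(n + 1) : ℤ)) (by intro a b hab; simp only at hab; omega)
    rw [hs1.hasSum_iff_tendsto_nat]
    have : ∀ N : ℕ, ∑ n ∈ Finset.range N, (H (-(n + 1)) - H (-(n + 1) + 1)) = H (-N) - H 0 := by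
      intro N
      have := Finset.sum_range_sub (fun n : ℕ ↦ H (-n)) N
      simp only [Nat.cast_add, Nat.cast_one, Nat.cast_zero, neg_zero] at this
      rw [← this]
      refine Finset.sum_congr rfl fun n _ ↦ ?_
      congr 2; ring
    simp_rw [this]
    have := h2.sub_const (H 0)
    rwa [zero_sub] at this
  have := HasSum.of_nat_of_neg_add_one (f := fun n : ℤ ↦ H n - H (n + 1)) a1 a2
  rwa [add_neg_cancel] at this

lemma tend_inv (w c : ℂ) (hc : c ≠ 0) :
    Tendsto (fun n : ℕ ↦ 1 / (w + n * c)) atTop (𝓝 0) := by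
  simp only [one_div]
  refine tendsto_inv₀_cobounded.comp ?_
  rw [← tendsto_norm_atTop_iff_cobounded]
  have hb : Tendsto (fun n : ℕ ↦ (n : ℝ) * ‖c‖ - ‖w‖) atTop atTop :=
    tendsto_atTop_add_const_right _ _
      (tendsto_natCast_atTop_atTop.atTop_mul_const (norm_pos_iff.mpr hc))
  refine tendsto_atTop_mono (fun n ↦ ?_) hb
  have := norm_sub_le (w + n * c) w
  rw [add_sub_cancel_left, norm_mul, Complex.norm_natCast] at this
  linarith

variable (L : PeriodPair)

lemma wz_hasSum (z : ℂ) :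
    HasSum (fun l : L.lattice ↦ 1 / (z - l.1) + 1 / l.1 + z / l.1 ^ 2) (wz L z) := by
  have h1 := hasSum_ite_eq (0 : L.lattice) (1 / z)
  refine (h1.add (zE_hasSum L z)).congr_fun ?_
  intro l
  by_cases h : l = 0
  · subst h; simp
  · have h' : l.1 ≠ 0 := by simpa using h
    simp [h]

open EisensteinSeries UpperHalfPlane in
lemma wz_eta (t : ℍ) (ω : ℂ) (hω : ω ≠ 0) (h1 : L.ω₁ = ω) (h2 : L.ω₂ = ω * t) (z : ℂ) :
    wz L (z + ω) - wz L z = G2 t / ω := by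
  have hS := (wz_hasSum L (z + ω)).sub (wz_hasSum L z)
  rw [← (L.latticeEquivProd.symm.toEquiv).hasSum_iff, ← (Equiv.prodComm ℤ ℤ).hasSum_iff] at hS
  set F : ℤ × ℤ → ℂ := fun p ↦ (1 / (z + ω - p.2 * ω - p.1 * (ω * t))
    - 1 / (z - p.2 * ω - p.1 * (ω * t))) + (1 / ω) * eisSummand 2 ![p.1, p.2] t with hF
  have hS' : HasSum F (wz L (z + ω) - wz L z) := by
    refine hS.congr_fun ?_
    rintro ⟨m, n⟩
    have hl := L.latticeEquiv_symm_apply (n, m)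
    simp only [hF, Function.comp_apply, Equiv.prodComm_apply, Prod.swap_prod_mk,
      LinearEquiv.coe_toEquiv]
    rw [hl, h1, h2]
    simp only [eisSummand, Matrix.cons_val_zero, Matrix.cons_val_one]
    have e : ((n : ℂ) * ω + m * (ω * t)) = ω * (m * t + n) := by ring
    have e2 : z + ω - n * ω - m * (ω * t) = z + ω - ω * (m * t + n) := by ring
    have e3 : z - n * ω - m * (ω * t) = z - ω * (m * t + n) := by ring
    rw [e, e2, e3]
    generalize (m * (t:ℂ) + n) = x
    have e4 : x ^ (-2 : ℤ) = 1 / x ^ 2 := by simp [zpow_neg]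
    by_cases hx : x = 0
    · simp [hx]
    · rw [e4]; field_simp; ring
  have hin : ∀ m : ℤ, HasSum (fun n : ℤ ↦ F (m, n)) (1 / ω * e2Summand m t) := by
    intro m
    have he : HasSum (fun n : ℤ ↦ 1 / ω * eisSummand 2 ![m, n] t) (1 / ω * e2Summand m t) :=
      (e2Summand_summable m t).hasSum.mul_left _
    have hsF : Summable (fun n : ℤ ↦ F (m, n)) := hS'.summable.prod_factor m
    set H : ℤ → ℂ := fun n ↦ 1 / (z + ω - n * ω - m * (ω * t)) with hH
    have heq : ∀ n : ℤ, H n - H (n + 1) = F (m, n) - 1 / ω * eisSummand 2 ![m, n] t := by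
      intro n
      have : z + ω - ((n + 1 : ℤ) : ℂ) * ω - m * (ω * t) = z - n * ω - m * (ω * t) := by
        push_cast; ring
      simp only [hH, hF, this]; ring
    have hsH : Summable (fun n : ℤ ↦ H n - H (n + 1)) := by
      simp_rw [heq]; exact hsF.sub he.summable
    have ht := telesc H hsH
      (by
        refine (tend_inv (z + ω - m * (ω * t)) (-ω) (by simpa)).congr fun n ↦ ?_
        simp only [hH]; congr 1; push_cast; ring)
      (by
        refine (tend_inv (z + ω - m * (ω * t)) ω hω).congr fun n ↦ ?_
        simp only [hH]; congr 1; push_cast; ring)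
    have := ht.add he
    rw [zero_add] at this
    refine this.congr_fun ?_
    intro n
    rw [heq]; ring
  have hfin := hS'.prod_fiberwise hin
  have hsum : HasSum (fun m ↦ e2Summand m t) (ω * (wz L (z + ω) - wz L z)) := by
    refine (hfin.mul_left ω).congr_fun ?_
    intro m
    field_simp
  have : G2 t = ω * (wz L (z + ω) - wz L z) := by
    rw [G2, tsum_eq_of_summable_unconditional hsum.summable, hsum.tsum_eq]
  rw [this]; field_simp

open EisensteinSeries in
lemma G2_rho (t : UpperHalfPlane) (ht : (t : ℂ) ^ 2 + t + 1 = 0) : G2 t * (2 * t + 1) = 2 * π * I := by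
  have hS := G2_S_transform t
  have hT := congr_fun G2_T_transform t
  have hTt : G2 (ModularGroup.T • t) = G2 t := by
    have hden : UpperHalfPlane.denom ModularGroup.T t = 1 := by
      rw [ModularGroup.denom_apply]; simp [ModularGroup.T]
    rw [← hT, ModularForm.SL_slash_def]
    beta_reduce
    rw [hden]
    simp
  have ht0 : (t : ℂ) ≠ 0 := t.ne_zero
  have hST : ModularGroup.S • t = ModularGroup.T • t := by
    ext1
    rw [UpperHalfPlane.modular_S_smul, UpperHalfPlane.modular_T_smul]
    simp
    field_simp
    linear_combination -ht
  rw [hST, hTt] at hS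
  field_simp at hS
  have h3 : (t : ℂ) ^ 3 = 1 := by linear_combination (t - 1 : ℂ) * ht
  have : (t : ℂ) * (G2 t * (2 * t + 1)) = t * (2 * π * I) := by
    linear_combination hS + G2 t * ht
  exact mul_left_cancel₀ ht0 this

end WZ

namespace WZ
open PeriodPair Filter Topology

section gen
variable (L : PeriodPair)

lemma P_not_cube_const (h : ∀ z ∉ L.lattice, 4 * L.weierstrassP z ^ 3 = 1) : False := by
  have c3 : Tendsto (L.weierstrassPExcept 0) (𝓝[≠] 0) (𝓝 0) := by
    have := (L.analyticAt_weierstrassPExcept 0).continuousAt.tendsto.mono_left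
      (nhdsWithin_le_nhds (s := {0}ᶜ))
    simpa using this
  have c4 : Tendsto (fun z : ℂ ↦ z) (𝓝[≠] 0) (𝓝 0) :=
    (continuous_id.tendsto 0).mono_left nhdsWithin_le_nhds
  have t1 : Tendsto (fun z : ℂ ↦ 4 * (1 + z ^ 2 * L.weierstrassPExcept 0 z) ^ 3 - z ^ 6)
      (𝓝[≠] 0) (𝓝 (4 * (1 + 0 ^ 2 * 0) ^ 3 - 0 ^ 6)) :=
    (((((c4.pow 2).mul c3).const_add 1).pow 3).const_mul 4).sub (c4.pow 6)
  have t2 : Tendsto (fun z : ℂ ↦ 4 * (1 + z ^ 2 * L.weierstrassPExcept 0 z) ^ 3 - z ^ 6)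
      (𝓝[≠] 0) (𝓝 0) := by
    refine tendsto_const_nhds.congr' ?_
    filter_upwards [mem_nhdsWithin_of_mem_nhds (L.compl_lattice_sdiff_singleton_mem_nhds 0),
      self_mem_nhdsWithin] with z hz hz0
    have hz0 : z ≠ 0 := hz0
    have hzL : z ∉ L.lattice := fun h ↦ hz ⟨h, hz0⟩
    have := h z hzL
    rw [wP_eq] at this
    field_simp at this
    linear_combination -this
  have := tendsto_nhds_unique t1 t2
  norm_num at this

lemma P_second (h : ∀ z ∉ L.lattice, L.derivWeierstrassP z ^ 2 = 4 * L.weierstrassP z ^ 3 - 1)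
    (z : ℂ) (hz : z ∉ L.lattice) :
    HasDerivAt L.derivWeierstrassP (6 * L.weierstrassP z ^ 2) z := by
  have aD : AnalyticOnNhd ℂ L.derivWeierstrassP (L.lattice : Set ℂ)ᶜ :=
    L.analyticOnNhd_derivWeierstrassP
  have aP : AnalyticOnNhd ℂ L.weierstrassP (L.lattice : Set ℂ)ᶜ :=
    L.analyticOnNhd_weierstrassP
  have hP : ∀ z ∉ L.lattice, HasDerivAt L.weierstrassP (L.derivWeierstrassP z) z := by
    intro z hz
    have := wP_hasDerivAt L hz
    rwa [L.deriv_weierstrassP] at this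
  have hD : ∀ z ∉ L.lattice, HasDerivAt L.derivWeierstrassP (deriv L.derivWeierstrassP z) z :=
    fun z hz ↦ (aD z hz).differentiableAt.hasDerivAt
  have hprod : ∀ z ∈ (L.lattice : Set ℂ)ᶜ, L.derivWeierstrassP z *
      (deriv L.derivWeierstrassP z - 6 * L.weierstrassP z ^ 2) = 0 := by
    intro z hz
    have h1 := (hD z hz).pow 2
    have h2 := (((hP z hz).pow 3).const_mul 4).sub_const 1
    have he : (L.derivWeierstrassP ^ 2) =ᶠ[𝓝 z] (fun y ↦ 4 * (L.weierstrassP ^ 3) y - 1) := by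
      filter_upwards [L.isClosed_lattice.isOpen_compl.mem_nhds hz] with w hw
      exact h w hw
    have := (h2.congr_of_eventuallyEq he).unique h1
    simp at this
    linear_combination (-1/2) * this
  rcases AnalyticOnNhd.eq_zero_or_eq_zero_of_mul_eq_zero aD
    (g := fun z ↦ deriv L.derivWeierstrassP z - 6 * L.weierstrassP z ^ 2)
    (by
      intro z hz
      have := (aD z hz).deriv
      have := aP z hz
      fun_prop) hprod (lattice_compl_preconnected L) with h0 | h0
  · exfalso
    refine P_not_cube_const L fun z hz ↦ ?_
    have := h z hz
    rw [h0 z hz] at this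
    linear_combination -this
  · have := h0 z hz
    exact (hD z hz).congr_deriv (by linear_combination this)

/-- 3-torsion relations -/
lemma three_torsion (h : ∀ z ∉ L.lattice, L.derivWeierstrassP z ^ 2 = 4 * L.weierstrassP z ^ 3 - 1)
    (u : ℂ) (hu : u ∉ L.lattice) (h2 : u + u ∉ L.lattice) (h3 : 3 * u ∈ L.lattice) :
    (wz L (u + u) - wz L u - wz L u) ^ 2 = 3 * L.weierstrassP u ∧
    L.weierstrassP u ^ 4 = L.weierstrassP u := by
  have e : u + u = -u + (⟨3 * u, h3⟩ : L.lattice) := by simp; ring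
  have hPu : L.weierstrassP (u + u) = L.weierstrassP u := by
    rw [e, weierstrassP_add_coe, weierstrassP_neg]
  have hDu : L.derivWeierstrassP (u + u) = - L.derivWeierstrassP u := by
    rw [e, derivWeierstrassP_add_coe, derivWeierstrassP_neg]
  have hP : ∀ z ∉ L.lattice, HasDerivAt L.weierstrassP (L.derivWeierstrassP z) z := by
    intro z hz
    have := wP_hasDerivAt L hz
    rwa [L.deriv_weierstrassP] at this
  have hev : ∀ᶠ z in 𝓝 u, z ∉ L.lattice ∧ z + u ∉ L.lattice := by
    have o1 : ∀ᶠ w in 𝓝 u, w ∉ L.lattice := L.isClosed_lattice.isOpen_compl.mem_nhds hu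
    have o2 : ∀ᶠ w in 𝓝 u, w + u ∉ L.lattice :=
      (continuous_add_const u).continuousAt.eventually
        (L.isClosed_lattice.isOpen_compl.mem_nhds h2)
    exact o1.and o2
  set g : ℂ → ℂ := fun z ↦ wz L (z + u) - wz L z - wz L u with hg
  have hgd : ∀ z, z ∉ L.lattice → z + u ∉ L.lattice →
      HasDerivAt g (L.weierstrassP z - L.weierstrassP (z + u)) z := by
    intro z hz1 hz2
    have := (((wz_hasDerivAt L hz2).comp_add_const z u).fun_sub (wz_hasDerivAt L hz1)).sub_const
      (wz L u)
    exact this.congr_deriv (by ring)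
  -- first derivative of the addition formula
  have hfirst : ∀ᶠ z in 𝓝 u, 2 * g z * (L.weierstrassP z - L.weierstrassP (z + u)) =
      L.derivWeierstrassP (z + u) + L.derivWeierstrassP z := by
    filter_upwards [hev.eventually_nhds] with z hz
    obtain ⟨hz1, hz2⟩ := hz.self_of_nhds
    have a1 := (hgd z hz1 hz2).fun_pow 2
    have a2 := (((hP _ hz2).comp_add_const z u).fun_add (hP _ hz1)).add_const (L.weierstrassP u)
    have he : (fun z ↦ g z ^ 2) =ᶠ[𝓝 z]
        (fun z ↦ L.weierstrassP (z + u) + L.weierstrassP z + L.weierstrassP u) := by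
      filter_upwards [hz] with w hw
      exact add_formula L u w hu hw.1 hw.2
    have := (a2.congr_of_eventuallyEq he).unique a1
    simp at this
    linear_combination -this
  have b1 := ((hgd u hu h2).const_mul 2).fun_mul
    ((hP u hu).fun_sub ((hP _ h2).comp_add_const u u))
  have b2 := ((P_second L h _ h2).comp_add_const u u).fun_add (P_second L h _ hu)
  have key := (b2.congr_of_eventuallyEq hfirst).unique b1
  have hadd := add_formula L u u hu hu h2
  rw [hPu] at hadd
  rw [hPu, hDu] at key
  have hgu : g u = wz L (u + u) - wz L u - wz L u := rfl
  rw [hgu] at key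
  have hode := h u hu
  generalize wz L (u + u) - wz L u - wz L u = G at *
  generalize L.weierstrassP u = p at *
  generalize L.derivWeierstrassP u = d at *
  have k1 : G * d = 3 * p ^ 2 := by linear_combination (-1/4) * key
  refine ⟨by linear_combination hadd, ?_⟩
  have k2 : (G * d) ^ 2 = 9 * p ^ 4 := by rw [k1]; ring
  rw [mul_pow, hadd, hode] at k2
  linear_combination (1/3) * k2

end gen
end WZ


namespace WZ
open PeriodPair Filter Topology

lemma sqrt3_sq : ((Real.sqrt 3 : ℝ) : ℂ) ^ 2 = 3 := by
  rw [← Complex.ofReal_pow, Real.sq_sqrt (by norm_num)]; norm_num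

lemma sqrt3_ne : ((Real.sqrt 3 : ℝ) : ℂ) ≠ 0 := by
  have : Real.sqrt 3 ≠ 0 := by positivity
  exact_mod_cast this

lemma tau_rel : tau ^ 2 + tau + 1 = 0 := by
  unfold tau
  linear_combination (Complex.I ^ 2 / 4) * sqrt3_sq + (3 / 4 : ℂ) * Complex.I_sq

lemma tau_re : tau.re = -1 / 2 := by
  simp [tau]

lemma tau_im : tau.im = Real.sqrt 3 / 2 := by
  simp [tau]

lemma tau_im_pos : 0 < tau.im := by
  rw [tau_im]; positivity

lemma tau_conj : conj tau = -1 - tau := by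
  apply Complex.ext
  · simp [tau_re]; norm_num
  · simp

lemma two_tau : 2 * tau + 1 = (Real.sqrt 3 : ℂ) * Complex.I := by
  unfold tau; ring

/-- The period pair of the lattice. -/
def LP (ω : ℝ) (hω : 0 < ω) : PeriodPair where
  ω₁ := ω
  ω₂ := ω * tau
  indep := by
    rw [LinearIndependent.pair_iff]
    intro s t h
    have him := congrArg Complex.im h
    have hre := congrArg Complex.re h
    simp at him hre
    have ht : t = 0 := by
      rcases him with h | h | h
      · exact h
      · exact absurd h hω.ne'
      · exact absurd h tau_im_pos.ne'
    subst ht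
    simp at hre
    exact ⟨by rcases hre with h | h; exacts [h, absurd h hω.ne'], rfl⟩

lemma mem_Eis (z : ℂ) : z ∈ Eis ↔ ∃ m n : ℤ, z = m + n * tau := by
  constructor
  · intro h
    unfold Eis at h
    induction h using Subring.closure_induction with
    | mem x hx => exact ⟨0, 1, by simpa using hx⟩
    | zero => exact ⟨0, 0, by simp⟩
    | one => exact ⟨1, 0, by simp⟩
    | add x y _ _ hx hy =>
      obtain ⟨a, b, rfl⟩ := hx
      obtain ⟨c, d, rfl⟩ := hy
      exact ⟨a + c, b + d, by push_cast; ring⟩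
    | neg x _ hx =>
      obtain ⟨a, b, rfl⟩ := hx
      exact ⟨-a, -b, by push_cast; ring⟩
    | mul x y _ _ hx hy =>
      obtain ⟨a, b, rfl⟩ := hx
      obtain ⟨c, d, rfl⟩ := hy
      exact ⟨a * c - b * d, a * d + b * c - b * d, by
        push_cast; linear_combination (b * d : ℂ) * tau_rel⟩
  · rintro ⟨m, n, rfl⟩
    exact add_mem (intCast_mem _ _) (mul_mem (intCast_mem _ _) (Subring.subset_closure rfl))

lemma inLattice_iff (ω : ℝ) (hω : 0 < ω) (z : ℂ) : inLattice ω z ↔ z ∈ (LP ω hω).lattice := by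
  rw [mem_lattice]
  constructor
  · rintro ⟨⟨a, ha⟩, rfl⟩
    obtain ⟨m, n, rfl⟩ := (mem_Eis a).1 ha
    exact ⟨m, n, by simp only [LP]; ring⟩
  · rintro ⟨m, n, rfl⟩
    exact ⟨⟨m + n * tau, (mem_Eis _).2 ⟨m, n, rfl⟩⟩, by simp only [LP]; ring⟩

lemma tsum_bridge (ω : ℝ) (hω : 0 < ω) (g : ℂ → ℂ) :
    ∑' a : {w : ℂ // inLattice ω w ∧ w ≠ 0}, g a
      = ∑' l : (LP ω hω).lattice, if l.1 = 0 then 0 else g l.1 := by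
  have h1 := tsum_subtype {w : ℂ | inLattice ω w ∧ w ≠ 0} g
  have h2 := tsum_subtype ((LP ω hω).lattice : Set ℂ) (fun l ↦ if l = 0 then 0 else g l)
  refine h1.trans (Eq.trans ?_ h2.symm)
  refine tsum_congr fun z ↦ ?_
  have := inLattice_iff ω hω z
  by_cases hz : z ∈ (LP ω hω).lattice <;> by_cases h0 : z = 0 <;>
    simp [Set.indicator, this, hz, h0]

lemma wp_eq (ω : ℝ) (hω : 0 < ω) : wp ω = (LP ω hω).weierstrassP := by
  funext z
  rw [wP_eq, wp, tsum_bridge ω hω (fun a ↦ 1 / (z - a) ^ 2 - 1 / a ^ 2)]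
  rfl

lemma wzeta_eq (ω : ℝ) (hω : 0 < ω) : wzeta ω = wz (LP ω hω) := by
  funext z
  rw [wz, wzeta, tsum_bridge ω hω (fun a ↦ 1 / (z - a) + 1 / a + z / a ^ 2)]
  rfl

lemma conj_mem (ω : ℝ) (hω : 0 < ω) {z : ℂ} (hz : z ∈ (LP ω hω).lattice) :
    conj z ∈ (LP ω hω).lattice := by
  rw [mem_lattice] at hz ⊢
  obtain ⟨m, n, rfl⟩ := hz
  refine ⟨m - n, -n, ?_⟩
  simp only [LP, map_add, map_mul, map_intCast, Complex.conj_ofReal, tau_conj]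
  push_cast; ring

def conjE (ω : ℝ) (hω : 0 < ω) : (LP ω hω).lattice ≃ (LP ω hω).lattice where
  toFun l := ⟨conj l.1, conj_mem ω hω l.2⟩
  invFun l := ⟨conj l.1, conj_mem ω hω l.2⟩
  left_inv l := by ext; simp
  right_inv l := by ext; simp

lemma conj_tsum (ω : ℝ) (hω : 0 < ω) (g : ℂ → ℂ) (hg : ∀ z, conj (g z) = g (conj z)) :
    conj (∑' l : (LP ω hω).lattice, g l.1) = ∑' l : (LP ω hω).lattice, g l.1 := by
  rw [Complex.conj_tsum]
  rw [← (conjE ω hω).tsum_eq]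
  refine tsum_congr fun l ↦ ?_
  rw [hg]
  simp [conjE]

lemma P_real (ω : ℝ) (hω : 0 < ω) (x : ℝ) :
    ((((LP ω hω).weierstrassP x).re : ℝ) : ℂ) = (LP ω hω).weierstrassP x := by
  rw [← Complex.conj_eq_iff_re]
  exact conj_tsum ω hω (fun l ↦ 1 / ((x : ℂ) - l) ^ 2 - 1 / l ^ 2) (by intro z; simp)

lemma Pderiv_real (ω : ℝ) (hω : 0 < ω) (x : ℝ) :
    ((((LP ω hω).derivWeierstrassP x).re : ℝ) : ℂ) = (LP ω hω).derivWeierstrassP x := by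
  rw [← Complex.conj_eq_iff_re]
  rw [derivWeierstrassP, map_neg]
  exact congrArg _ (conj_tsum ω hω (fun l ↦ 2 / ((x : ℂ) - l) ^ 3)
    (by intro z; simp only [map_div₀, map_pow, map_sub, map_ofNat, Complex.conj_ofReal]))

lemma wz_real (ω : ℝ) (hω : 0 < ω) (x : ℝ) :
    (((wz (LP ω hω) x).re : ℝ) : ℂ) = wz (LP ω hω) x := by
  rw [← Complex.conj_eq_iff_re, ← (wz_hasSum (LP ω hω) x).tsum_eq]
  exact conj_tsum ω hω (fun l ↦ 1 / ((x : ℂ) - l) + 1 / l + x / l ^ 2) (by intro z; simp)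

lemma Ioo_notMem (ω : ℝ) (hω : 0 < ω) (x : ℝ) (h0 : 0 < x) (h1 : x < ω) :
    (x : ℂ) ∉ (LP ω hω).lattice := by
  intro h
  rw [mem_lattice] at h
  obtain ⟨m, n, h⟩ := h
  simp only [LP] at h
  have him := congrArg Complex.im h
  simp at him
  have hn : n = 0 := by
    rcases him with h | h | h
    · exact h
    · exact absurd h hω.ne'
    · exact absurd h tau_im_pos.ne'
  subst hn
  have hre : (m : ℝ) * ω = x := by
    simp at h
    exact_mod_cast h
  have m0 : (0 : ℝ) < m := by
    by_contra hc
    push Not at hc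
    nlinarith
  have m1 : (m : ℝ) < 1 := by
    by_contra hc
    push Not at hc
    nlinarith
  have m0' : 0 < m := by exact_mod_cast m0
  have m1' : m < 1 := by exact_mod_cast m1
  omega

lemma eta (ω : ℝ) (hω : 0 < ω) (z : ℂ) :
    wz (LP ω hω) (z + ω) - wz (LP ω hω) z = 2 * (Real.pi : ℂ) / ((Real.sqrt 3 : ℂ) * ω) := by
  have hω0 : (ω : ℂ) ≠ 0 := by exact_mod_cast hω.ne'
  let t : UpperHalfPlane := ⟨tau, tau_im_pos⟩
  have h1 := wz_eta (LP ω hω) t ω hω0 rfl rfl z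
  have h2 : EisensteinSeries.G2 t * (2 * tau + 1) = 2 * Real.pi * Complex.I := G2_rho t tau_rel
  rw [two_tau] at h2
  have h3 : EisensteinSeries.G2 t * (Real.sqrt 3 : ℂ) = 2 * Real.pi :=
    mul_right_cancel₀ Complex.I_ne_zero (by linear_combination h2)
  rw [h1, ← h3]
  have := sqrt3_ne
  field_simp

section final
variable (ω : ℝ) (hω : 0 < ω)

lemma P_pos (h : ∀ z ∉ (LP ω hω).lattice,
      (LP ω hω).derivWeierstrassP z ^ 2 = 4 * (LP ω hω).weierstrassP z ^ 3 - 1)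
    (x : ℝ) (h0 : 0 < x) (h1 : x < ω) : 0 < ((LP ω hω).weierstrassP x).re := by
  have e := h x (Ioo_notMem ω hω x h0 h1)
  rw [← P_real, ← Pderiv_real] at e
  have e' : ((LP ω hω).derivWeierstrassP x).re ^ 2 = 4 * ((LP ω hω).weierstrassP x).re ^ 3 - 1 := by
    exact_mod_cast e
  by_contra hc
  push Not at hc
  have : ((LP ω hω).weierstrassP x).re ^ 3 ≤ 0 := Odd.pow_nonpos (by decide) hc
  nlinarith [sq_nonneg ((LP ω hω).derivWeierstrassP x).re]

lemma wz_anti (h : ∀ z ∉ (LP ω hω).lattice,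
      (LP ω hω).derivWeierstrassP z ^ 2 = 4 * (LP ω hω).weierstrassP z ^ 3 - 1) :
    StrictAntiOn (fun x : ℝ ↦ (wz (LP ω hω) x).re) (Set.Ioo 0 ω) := by
  have hd : ∀ x ∈ Set.Ioo 0 ω, HasDerivAt (fun x : ℝ ↦ (wz (LP ω hω) x).re)
      (-(LP ω hω).weierstrassP x).re x := fun x hx ↦
    (wz_hasDerivAt (LP ω hω) (Ioo_notMem ω hω x hx.1 hx.2)).real_of_complex
  apply strictAntiOn_of_deriv_neg (convex_Ioo 0 ω)
  · exact fun x hx ↦ (hd x hx).continuousAt.continuousWithinAt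
  · intro x hx
    rw [interior_Ioo] at hx
    rw [(hd x hx).deriv, Complex.neg_re]
    linarith [P_pos ω hω h x hx.1 hx.2]

lemma main (h : ∀ z ∉ (LP ω hω).lattice,
      (LP ω hω).derivWeierstrassP z ^ 2 = 4 * (LP ω hω).weierstrassP z ^ 3 - 1) :
    wz (LP ω hω) ((ω : ℂ) / 2) = (Real.pi : ℂ) / ((Real.sqrt 3 : ℂ) * (ω : ℂ)) ∧
    wz (LP ω hω) ((ω : ℂ) / 3) =
      2 * (Real.pi : ℂ) / (3 * (Real.sqrt 3 : ℂ) * (ω : ℂ)) + 1 / (Real.sqrt 3 : ℂ) ∧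
    wz (LP ω hω) (2 * (ω : ℂ) / 3) =
      4 * (Real.pi : ℂ) / (3 * (Real.sqrt 3 : ℂ) * (ω : ℂ)) - 1 / (Real.sqrt 3 : ℂ) := by
  have hω0 : (ω : ℂ) ≠ 0 := by exact_mod_cast hω.ne'
  have s0 := sqrt3_ne
  have e2 := eta ω hω (-((ω : ℂ) / 2))
  rw [wz_neg, show -((ω : ℂ) / 2) + ω = ω / 2 by ring] at e2
  have e3 := eta ω hω (-((ω : ℂ) / 3))
  rw [wz_neg, show -((ω : ℂ) / 3) + ω = 2 * ω / 3 by ring] at e3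
  have v2 : wz (LP ω hω) ((ω : ℂ) / 2) = (Real.pi : ℂ) / ((Real.sqrt 3 : ℂ) * (ω : ℂ)) := by
    linear_combination e2 / 2
  -- the sign
  have hanti := wz_anti ω hω h (a := ω / 3) (b := ω / 2) ⟨by linarith, by linarith⟩
    ⟨by linarith, by linarith⟩ (by linarith)
  have r2 : (wz (LP ω hω) ((ω / 2 : ℝ) : ℂ)).re = Real.pi / (Real.sqrt 3 * ω) := by
    push_cast
    rw [v2]
    exact_mod_cast Complex.ofReal_re (Real.pi / (Real.sqrt 3 * ω))
  have hpos := P_pos ω hω h (ω / 3) (by linarith) (by linarith)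
  have hu := Ioo_notMem ω hω (ω / 3) (by linarith) (by linarith)
  have huu : ((ω / 3 : ℝ) : ℂ) + ((ω / 3 : ℝ) : ℂ) ∉ (LP ω hω).lattice := by
    have := Ioo_notMem ω hω (ω / 3 + ω / 3) (by linarith) (by linarith)
    exact_mod_cast this
  have h3u : 3 * ((ω / 3 : ℝ) : ℂ) ∈ (LP ω hω).lattice := by
    have := (LP ω hω).ω₁_mem_lattice
    convert this using 1
    simp only [LP]
    push_cast; ring
  obtain ⟨t1, t2⟩ := three_torsion (LP ω hω) h _ hu huu h3u
  have rP := P_real ω hω (ω / 3)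
  have rZ := wz_real ω hω (ω / 3)
  set p := ((LP ω hω).weierstrassP ((ω / 3 : ℝ) : ℂ)).re with hp
  set r := (wz (LP ω hω) ((ω / 3 : ℝ) : ℂ)).re with hr
  rw [← rP] at t1 t2
  have q : p ^ 4 = p := by exact_mod_cast t2
  have p1 : p = 1 := by
    have : p ^ 3 = 1 := mul_left_cancel₀ hpos.ne' (by linear_combination q)
    exact (pow_eq_one_iff_of_nonneg hpos.le (by norm_num)).1 this
  have ed : wz (LP ω hω) (((ω / 3 : ℝ) : ℂ) + ((ω / 3 : ℝ) : ℂ))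
      = 2 * (Real.pi : ℂ) / ((Real.sqrt 3 : ℂ) * ω) - r := by
    rw [rZ]
    push_cast
    rw [show (ω : ℂ) / 3 + ω / 3 = 2 * ω / 3 by ring]
    linear_combination e3
  rw [ed, ← rZ, p1] at t1
  have G : (2 * Real.pi / (Real.sqrt 3 * ω) - r - r - r) ^ 2 = 3 := by
    have : (((2 * Real.pi / (Real.sqrt 3 * ω) - r - r - r) ^ 2 : ℝ) : ℂ) = ((3 : ℝ) : ℂ) := by
      push_cast
      rw [t1]; norm_num
    exact_mod_cast this
  have hlt : Real.pi / (Real.sqrt 3 * ω) < r := by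
    have h5 : (wz (LP ω hω) ((ω / 2 : ℝ) : ℂ)).re < r := hanti
    rwa [r2] at h5
  have hη : 0 < Real.pi / (Real.sqrt 3 * ω) := by positivity
  have Gneg : 2 * Real.pi / (Real.sqrt 3 * ω) - r - r - r < 0 := by
    rw [mul_div_assoc]; linarith
  have G' : -(2 * Real.pi / (Real.sqrt 3 * ω) - r - r - r) = Real.sqrt 3 := by
    rw [eq_comm, Real.sqrt_eq_iff_mul_self_eq (by norm_num) (by linarith)]
    linarith [G]
  have rv : (r : ℂ) = (2 * Real.pi / (Real.sqrt 3 * ω) + Real.sqrt 3) / 3 := by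
    have : r = (2 * Real.pi / (Real.sqrt 3 * ω) + Real.sqrt 3) / 3 := by linarith
    rw [this]; push_cast; ring
  have v3 : wz (LP ω hω) ((ω : ℂ) / 3) =
      2 * (Real.pi : ℂ) / (3 * (Real.sqrt 3 : ℂ) * (ω : ℂ)) + 1 / (Real.sqrt 3 : ℂ) := by
    have e : ((ω / 3 : ℝ) : ℂ) = (ω : ℂ) / 3 := by push_cast; ring
    rw [← e, ← rZ, rv]
    field_simp
    linear_combination (ω : ℂ) * sqrt3_sq
  refine ⟨v2, v3, ?_⟩
  have : wz (LP ω hω) (2 * (ω : ℂ) / 3) =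
    2 * (Real.pi : ℂ) / ((Real.sqrt 3 : ℂ) * ω) - wz (LP ω hω) ((ω : ℂ) / 3) := by
    linear_combination e3
  rw [this, v3]
  field_simp
  ring

end final

end WZ

/-- From [Qiu], (2.6): `ζ(ω/2) = π/(√3·ω)`, `ζ(ω/3) = 2π/(3√3·ω) + 1/√3`, and `ζ(2ω/3) = 4π/(3√3·ω) − 1/√3`.
Here `ω > 0` is pinned down by the differential equation `℘′² = 4℘³ − 1` for the
lattice `L_ω = ω·ℤ[τ]` (equivalently, the lattice invariants are `g₂ = 0`, `g₃ = 1`). -/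
theorem wzeta_values_at_rational_periods
    (ω : ℝ) (hω : 0 < ω)
    (hODE : ∀ z : ℂ, ¬ inLattice ω z → deriv (wp ω) z ^ 2 = 4 * wp ω z ^ 3 - 1) :
    wzeta ω ((ω : ℂ) / 2) = (Real.pi : ℂ) / ((Real.sqrt 3 : ℂ) * (ω : ℂ)) ∧
    wzeta ω ((ω : ℂ) / 3) =
      2 * (Real.pi : ℂ) / (3 * (Real.sqrt 3 : ℂ) * (ω : ℂ)) + 1 / (Real.sqrt 3 : ℂ) ∧
    wzeta ω (2 * (ω : ℂ) / 3) =
      4 * (Real.pi : ℂ) / (3 * (Real.sqrt 3 : ℂ) * (ω : ℂ)) - 1 / (Real.sqrt 3 : ℂ) := by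
  have h : ∀ z ∉ (WZ.LP ω hω).lattice,
      (WZ.LP ω hω).derivWeierstrassP z ^ 2 = 4 * (WZ.LP ω hω).weierstrassP z ^ 3 - 1 := by
    intro z hz
    have := hODE z (fun h ↦ hz ((WZ.inLattice_iff ω hω z).1 h))
    rwa [WZ.wp_eq ω hω, PeriodPair.deriv_weierstrassP] at this
  rw [WZ.wzeta_eq ω hω]
  exact WZ.main ω hω h
end
end
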